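/- Let {X_i}_{i=1}^n be i.i.d. N(0, I_d) random vectors in ℝ^d. Then, as d, n → ∞ with d/n → γ ∈ [0, ∞), for every δ > 0 the probability of the event { inf over (u, β₀) ∈ ℝ^d × ℝ with ‖u‖₂ ≤ 1, |β₀| ≤ 1, and max{‖u‖₂, |β₀|} = 1 of (1/n) Σ_{i=1}^n |X_iᵀu + β₀| ≥ √(2/π) − √γ − δ } converges to 1; that is, the liminf of this infimum is at least √(2/π) − √γ in probability. -/

import Mathlib

open MeasureTheory ProbabilityTheory Filter Finset

noncomputable section

/-- The standard Gaussian measure `N(0, I_d)` on `ℝ^d`. -/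
def stdGaussian (d : ℕ) : Measure (Fin d → ℝ) := Measure.pi fun _ => gaussianReal 0 1




/-- iid centred Gaussians with variance `v`, indexed by `κ`. -/
def gpi (κ : Type) [Fintype κ] (v : NNReal) : Measure (κ → ℝ) :=
  Measure.pi fun _ => gaussianReal 0 v

instance gpi_prob (κ : Type) [Fintype κ] (v : NNReal) : IsProbabilityMeasure (gpi κ v) := by
  unfold gpi; infer_instance

lemma gpi_scale (κ : Type) [Fintype κ] (v : NNReal) :
    (gpi κ 1).map (fun x => Real.sqrt v • x) = gpi κ v := by
  unfold gpi
  have h := Measure.pi_map_pi (ι := κ) (μ := fun _ => gaussianReal 0 1)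
    (f := fun _ x => Real.sqrt v * x) (fun _ => by fun_prop)
  have e : (fun x : κ → ℝ => Real.sqrt v • x) = fun x i => Real.sqrt v * x i := by
    ext x i; simp
  rw [e]
  refine Eq.trans h ?_
  congr 1; ext1 i
  rw [gaussianReal_map_const_mul]
  congr 1
  · simp
  · ext; simp

lemma gpi_neg (κ : Type) [Fintype κ] (v : NNReal) :
    (gpi κ v).map (fun x => -x) = gpi κ v := by
  unfold gpi
  have h := Measure.pi_map_pi (ι := κ) (μ := fun _ => gaussianReal 0 v)
    (f := fun _ x => -x) (fun _ => by fun_prop)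
  refine Eq.trans h ?_
  congr 1; ext1 i
  rw [gaussianReal_map_neg, neg_zero]

lemma gpi_add (κ : Type) [Fintype κ] (s t : NNReal) :
    ((gpi κ s).prod (gpi κ t)).map (fun p => p.1 + p.2) = gpi κ (s + t) := by
  unfold gpi
  have h := measurePreserving_arrowProdEquivProdArrow ℝ ℝ κ (fun _ => gaussianReal 0 s)
    (fun _ => gaussianReal 0 t)
  rw [← h.map_eq, Measure.map_map (by fun_prop) (MeasurableEquiv.measurable _)]
  have h2 := Measure.pi_map_pi (ι := κ) (μ := fun _ => (gaussianReal 0 s).prod (gaussianReal 0 t))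
    (f := fun _ (p : ℝ × ℝ) => p.1 + p.2) (fun _ => by fun_prop)
  refine Eq.trans h2 ?_
  congr 1; ext1 i
  have := @gaussianReal_conv_gaussianReal 0 0 s t
  rw [Measure.conv] at this
  simpa using this

lemma gpi_integral_add (κ : Type) [Fintype κ] (s t : NNReal) (f : (κ → ℝ) → ℝ)
    (hf : Continuous f) (B : ℝ) (hB : ∀ x, |f x| ≤ B) :
    ∫ x, f x ∂(gpi κ (s + t)) = ∫ x, ∫ y, f (x + y) ∂(gpi κ t) ∂(gpi κ s) := by
  rw [← gpi_add, integral_map (by fun_prop) hf.aestronglyMeasurable, integral_prod]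
  refine Integrable.of_bound (C := B) ?_ (ae_of_all _ fun p => ?_)
  · exact Continuous.aestronglyMeasurable (by fun_prop)
  · simpa using hB _

lemma gpi_coord_memLp (κ : Type) [Fintype κ] (k : κ) (p : ENNReal) (hp : p ≠ ⊤) :
    MemLp (fun x : κ → ℝ => x k) p (gpi κ 1) := by
  have h := memLp_id_gaussianReal' (μ := 0) (v := 1) p hp
  exact h.comp_measurePreserving (measurePreserving_eval (fun _ : κ => gaussianReal 0 1) k)

lemma gpi_lin_memLp (κ : Type) [Fintype κ] (c : κ → ℝ) (p : ENNReal) (hp : p ≠ ⊤) :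
    MemLp (fun x : κ → ℝ => ∑ k, c k * x k) p (gpi κ 1) :=
  memLp_finsetSum _ fun k _ => (gpi_coord_memLp κ k p hp).const_mul (c k)

lemma gpi_lin_sq_integrable (κ : Type) [Fintype κ] (c : κ → ℝ) :
    Integrable (fun x : κ → ℝ => (∑ k, c k * x k) ^ 2) (gpi κ 1) :=
  (gpi_lin_memLp κ c 2 (by simp)).integrable_sq

lemma gpi_lin_sq (κ : Type) [Fintype κ] (c : κ → ℝ) :
    ∫ x, (∑ k, c k * x k) ^ 2 ∂(gpi κ 1) = ∑ k, c k ^ 2 := by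
  have hm : ∫ x, (∑ k, c k * x k) ∂(gpi κ 1) = 0 := by
    have h : ∫ x, (∑ k, c k * x k) ∂((gpi κ 1).map (fun x => -x)) =
      ∫ x, (∑ k, c k * x k) ∂(gpi κ 1) := by rw [gpi_neg]
    rw [integral_map (by fun_prop) (Continuous.aestronglyMeasurable (by fun_prop))] at h
    simp [integral_neg] at h
    linarith
  rw [← variance_of_integral_eq_zero (X := fun x : κ → ℝ => ∑ k, c k * x k)
    (Continuous.aemeasurable (by fun_prop)) hm]
  have h := variance_sum_pi (ι := κ) (μ := fun _ => gaussianReal 0 1) (X := fun k x => c k * x)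
    (fun k => (memLp_id_gaussianReal' (μ := 0) (v := 1) 2 (by simp)).const_mul (c k))
  have e : (∑ k, fun x : κ → ℝ => c k * x k) = fun x => ∑ k, c k * x k := by
    ext x; simp
  rw [e] at h
  unfold gpi
  rw [h]
  refine Finset.sum_congr rfl fun k _ => ?_
  rw [variance_const_mul, variance_fun_id_gaussianReal]; simp

lemma gpi_norm_cube (κ : Type) [Fintype κ] :
    Integrable (fun x : κ → ℝ => ‖x‖ ^ 3) (gpi κ 1) := by
  have h : MemLp (fun x : κ → ℝ => ∑ k, ‖x k‖) 3 (gpi κ 1) :=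
    memLp_finsetSum _ fun k _ => (gpi_coord_memLp κ k 3 (by simp)).norm
  have h2 := h.integrable_norm_pow (p := 3) (by norm_num)
  refine h2.mono' (Continuous.aestronglyMeasurable (by fun_prop)) (ae_of_all _ fun x => ?_)
  have h0 : 0 ≤ ∑ k, ‖x k‖ := Finset.sum_nonneg fun k _ => norm_nonneg _
  have : ‖x‖ ≤ ∑ k, ‖x k‖ := by
    refine (pi_norm_le_iff_of_nonneg h0).2 fun k => ?_
    exact Finset.single_le_sum (f := fun k => ‖x k‖) (fun k _ => norm_nonneg _) (mem_univ k)
  rw [norm_pow, norm_norm, Real.norm_of_nonneg h0]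
  gcongr



lemma gpi_zero (κ : Type) [Fintype κ] : gpi κ 0 = Measure.dirac 0 := by
  rw [← gpi_scale]
  simp [Measure.map_const]

section
variable {κ κ₁ κ₂ : Type} [Fintype κ] [Fintype κ₁] [Fintype κ₂]
  {V : Type} [NormedAddCommGroup V] [NormedSpace ℝ V]

lemma int_bdd {κ : Type} [Fintype κ] (v : NNReal) (f : (κ → ℝ) → ℝ)
    (hf : Continuous f) (B : ℝ) (hB : ∀ x, |f x| ≤ B) : Integrable f (gpi κ v) :=
  Integrable.of_bound (C := B) hf.aestronglyMeasurable (ae_of_all _ fun p => by simpa using hB p)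

lemma smooth_cont (L : (κ → ℝ) →L[ℝ] V) (f : V → ℝ) (hf : Continuous f) (B : ℝ)
    (hB : ∀ x, |f x| ≤ B) (v : NNReal) : Continuous fun w => ∫ x, f (w + L x) ∂(gpi κ v) := by
  refine continuous_of_dominated (bound := fun _ => B) ?_ ?_ ?_ ?_
  · intro w; exact Continuous.aestronglyMeasurable (by fun_prop)
  · intro w; exact ae_of_all _ fun x => by simpa using hB _
  · exact integrable_const _
  · exact ae_of_all _ fun x => by fun_prop

lemma smooth_bdd (L : (κ → ℝ) →L[ℝ] V) (f : V → ℝ) (B : ℝ)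
    (hB : ∀ x, |f x| ≤ B) (v : NNReal) (w : V) : |∫ x, f (w + L x) ∂(gpi κ v)| ≤ B := by
  have := norm_integral_le_of_norm_le_const (μ := gpi κ v) (f := fun x => f (w + L x)) (C := B)
    (ae_of_all _ fun x => by simpa using hB _)
  simpa using this

lemma lind_step (L : (κ → ℝ) →L[ℝ] V) (f : V → ℝ) (hf : Continuous f) (B : ℝ)
    (hB : ∀ x, |f x| ≤ B) (q : V → V → ℝ) (hq2 : ∀ w (c : ℝ) v, q w (c • v) = c ^ 2 * q w v)
    (K : ℝ) (hK : 0 ≤ K)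
    (hT : ∀ w v, |f (w + v) + f (w - v) - 2 * f w - 2 * q w v| ≤ 2 * K * ‖v‖ ^ 3)
    (hi : ∀ w, Integrable (fun x => q w (L x)) (gpi κ 1)) (v : NNReal) (w : V) :
    |∫ x, f (w + L x) ∂(gpi κ v) - f w - v * ∫ x, q w (L x) ∂(gpi κ 1)| ≤
      K * (‖L‖ ^ 3 * ∫ x, ‖x‖ ^ 3 ∂(gpi κ 1)) * Real.sqrt v ^ 3 := by
  have e1 : ∫ x, f (w + L x) ∂(gpi κ v) = ∫ x, f (w + Real.sqrt v • L x) ∂(gpi κ 1) := by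
    rw [← gpi_scale, integral_map (by fun_prop) (Continuous.aestronglyMeasurable (by fun_prop))]
    simp
  have e2 : ∫ x, f (w + L x) ∂(gpi κ v) = ∫ x, f (w - Real.sqrt v • L x) ∂(gpi κ 1) := by
    rw [e1]
    conv_lhs => rw [← gpi_neg]
    rw [integral_map (by fun_prop) (Continuous.aestronglyMeasurable (by fun_prop))]
    simp [sub_eq_add_neg]
  have i1 : Integrable (fun x => f (w + Real.sqrt v • L x)) (gpi κ 1) :=
    int_bdd 1 _ (by fun_prop) B fun _ => hB _
  have i2 : Integrable (fun x => f (w - Real.sqrt v • L x)) (gpi κ 1) :=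
    int_bdd 1 _ (by fun_prop) B fun _ => hB _
  have hv : Real.sqrt v ^ 2 = v := Real.sq_sqrt v.2
  have e3 : ∫ x, (f (w + Real.sqrt v • L x) + f (w - Real.sqrt v • L x) - 2 * f w
      - 2 * q w (Real.sqrt v • L x)) ∂(gpi κ 1) =
      2 * (∫ x, f (w + L x) ∂(gpi κ v) - f w - v * ∫ x, q w (L x) ∂(gpi κ 1)) := by
    simp only [hq2, hv]
    have i3 : Integrable (fun x => f (w + Real.sqrt v • L x) + f (w - Real.sqrt v • L x))
      (gpi κ 1) := i1.add i2
    have i4 : Integrable (fun x => f (w + Real.sqrt v • L x) + f (w - Real.sqrt v • L x)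
      - 2 * f w) (gpi κ 1) := i3.sub (integrable_const _)
    rw [integral_sub i4 (((hi w).const_mul _).const_mul _),
      integral_sub i3 (integrable_const _), integral_add i1 i2, ← e1, ← e2,
      integral_const_mul]
    simp [integral_const_mul]; ring
  have e4 : |∫ x, (f (w + Real.sqrt v • L x) + f (w - Real.sqrt v • L x) - 2 * f w
      - 2 * q w (Real.sqrt v • L x)) ∂(gpi κ 1)| ≤
      ∫ x, (2 * K * (‖L‖ ^ 3 * Real.sqrt v ^ 3)) * ‖x‖ ^ 3 ∂(gpi κ 1) := by
    rw [← Real.norm_eq_abs]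
    refine norm_integral_le_of_norm_le ((gpi_norm_cube κ).const_mul _) (ae_of_all _ fun x => ?_)
    refine (hT w _).trans ?_
    rw [norm_smul, Real.norm_of_nonneg (Real.sqrt_nonneg _)]
    calc 2 * K * (Real.sqrt v * ‖L x‖) ^ 3 ≤ 2 * K * (Real.sqrt v * (‖L‖ * ‖x‖)) ^ 3 := by
          gcongr; exact L.le_opNorm x
      _ = _ := by ring
  rw [e3, abs_mul, abs_two, integral_const_mul] at e4
  nlinarith [e4]

/-- hybrid expectation -/
def hyb (L₁ : (κ₁ → ℝ) →L[ℝ] V) (L₂ : (κ₂ → ℝ) →L[ℝ] V) (f : V → ℝ) (w : V) (s t : NNReal) : ℝ :=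
  ∫ x, ∫ y, f (w + L₁ x + L₂ y) ∂(gpi κ₂ t) ∂(gpi κ₁ s)

lemma hyb_swap (L₁ : (κ₁ → ℝ) →L[ℝ] V) (L₂ : (κ₂ → ℝ) →L[ℝ] V) (f : V → ℝ) (w : V) (s t : NNReal)
    (hf : Continuous f) (B : ℝ) (hB : ∀ x, |f x| ≤ B) :
    hyb L₁ L₂ f w s t = hyb L₂ L₁ f w t s := by
  unfold hyb
  rw [integral_integral_swap]
  · simp only [add_right_comm]
  · refine Integrable.of_bound (C := B) ?_ (ae_of_all _ fun p => ?_)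
    · exact Continuous.aestronglyMeasurable (by unfold Function.uncurry; fun_prop)
    · simpa [Function.uncurry] using hB _

lemma hyb_right (L₁ : (κ₁ → ℝ) →L[ℝ] V) (L₂ : (κ₂ → ℝ) →L[ℝ] V) (f : V → ℝ) (w : V)
    (s t r : NNReal) (hf : Continuous f) (B : ℝ) (hB : ∀ x, |f x| ≤ B) :
    hyb L₁ L₂ f w s (t + r) = hyb L₁ L₂ (fun w => ∫ y, f (w + L₂ y) ∂(gpi κ₂ r)) w s t := by
  unfold hyb
  refine integral_congr_ae (ae_of_all _ fun x => ?_)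
  simp only
  rw [gpi_integral_add κ₂ t r _ (by fun_prop) B (fun _ => hB _)]
  simp [add_assoc]

lemma hyb_left (L₁ : (κ₁ → ℝ) →L[ℝ] V) (L₂ : (κ₂ → ℝ) →L[ℝ] V) (f : V → ℝ) (w : V)
    (s t r : NNReal) (hf : Continuous f) (B : ℝ) (hB : ∀ x, |f x| ≤ B) :
    hyb L₁ L₂ f w (s + r) t = hyb L₁ L₂ (fun w => ∫ y, f (w + L₁ y) ∂(gpi κ₁ r)) w s t := by
  rw [hyb_swap _ _ _ _ _ _ hf B hB, hyb_right _ _ _ _ _ _ _ hf B hB,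
    hyb_swap _ _ _ _ _ _ (smooth_cont L₁ f hf B hB r) B (smooth_bdd L₁ f B hB r)]

lemma hyb_mono (L₁ : (κ₁ → ℝ) →L[ℝ] V) (L₂ : (κ₂ → ℝ) →L[ℝ] V) (f g : V → ℝ) (w : V)
    (s t : NNReal) (hf : Continuous f) (B : ℝ) (hB : ∀ x, |f x| ≤ B)
    (hg : Continuous g) (hB' : ∀ x, |g x| ≤ B) (e : ℝ) (h : ∀ x, f x ≤ g x + e) :
    hyb L₁ L₂ f w s t ≤ hyb L₁ L₂ g w s t + e := by
  unfold hyb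
  have hc : ∀ f : V → ℝ, Continuous f → (∀ x, |f x| ≤ B) →
      Integrable (fun x => ∫ y, f (w + L₁ x + L₂ y) ∂(gpi κ₂ t)) (gpi κ₁ s) := by
    intro f hf hB
    refine int_bdd s _ ?_ B (fun x => smooth_bdd L₂ f B hB t _)
    exact (smooth_cont L₂ f hf B hB t).comp (by fun_prop : Continuous fun x => w + L₁ x)
  have : ∫ x, ∫ y, f (w + L₁ x + L₂ y) ∂(gpi κ₂ t) ∂(gpi κ₁ s) ≤
      ∫ x, ((∫ y, g (w + L₁ x + L₂ y) ∂(gpi κ₂ t)) + e) ∂(gpi κ₁ s) := by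
    refine integral_mono (hc f hf hB) ((hc g hg hB').add (integrable_const _)) fun x => ?_
    have : ∫ y, f (w + L₁ x + L₂ y) ∂(gpi κ₂ t) ≤
       ∫ y, (g (w + L₁ x + L₂ y) + e) ∂(gpi κ₂ t) := by
      refine integral_mono (int_bdd t _ (by fun_prop) B fun _ => hB _)
        ((int_bdd t _ (by fun_prop) B fun _ => hB' _).add (integrable_const _)) fun y => h _
    rw [integral_add (int_bdd t _ (by fun_prop) B fun _ => hB' _) (integrable_const _)] at this
    simpa using this
  rw [integral_add (hc g hg hB') (integrable_const _)] at this
  simpa using this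

theorem lindeberg (L₁ : (κ₁ → ℝ) →L[ℝ] V) (L₂ : (κ₂ → ℝ) →L[ℝ] V) (f : V → ℝ)
    (hf : Continuous f) (B : ℝ) (hB : ∀ x, |f x| ≤ B)
    (q : V → V → ℝ) (hq2 : ∀ w (c : ℝ) v, q w (c • v) = c ^ 2 * q w v)
    (K : ℝ) (hK : 0 ≤ K)
    (hT : ∀ w v, |f (w + v) + f (w - v) - 2 * f w - 2 * q w v| ≤ 2 * K * ‖v‖ ^ 3)
    (hi₁ : ∀ w, Integrable (fun x => q w (L₁ x)) (gpi κ₁ 1))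
    (hi₂ : ∀ w, Integrable (fun x => q w (L₂ x)) (gpi κ₂ 1))
    (hQ : ∀ w, ∫ x, q w (L₂ x) ∂(gpi κ₂ 1) ≤ ∫ x, q w (L₁ x) ∂(gpi κ₁ 1)) (w₀ : V) :
    ∫ x, f (w₀ + L₂ x) ∂(gpi κ₂ 1) ≤ ∫ x, f (w₀ + L₁ x) ∂(gpi κ₁ 1) := by
  set C₁ := K * (‖L₁‖ ^ 3 * ∫ x, ‖x‖ ^ 3 ∂(gpi κ₁ 1))
  set C₂ := K * (‖L₂‖ ^ 3 * ∫ x, ‖x‖ ^ 3 ∂(gpi κ₂ 1))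
  have key : ∀ (δ : NNReal) (j : ℕ) (s t : NNReal),
      hyb L₁ L₂ f w₀ s (t + j * δ) ≤ hyb L₁ L₂ f w₀ (s + j * δ) t
        + j * ((C₁ + C₂) * Real.sqrt δ ^ 3) := by
    intro δ j
    induction j with
    | zero => intro s t; simp
    | succ j ih =>
      intro s t
      have h1 : hyb L₁ L₂ f w₀ s (t + (j + 1 : ℕ) * δ) ≤ hyb L₁ L₂ f w₀ (s + δ) (t + j * δ)
          + (C₁ + C₂) * Real.sqrt δ ^ 3 := by
        have : t + (j + 1 : ℕ) * δ = t + j * δ + δ := by push_cast; ring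
        rw [this, hyb_right _ _ _ _ _ _ _ hf B hB, hyb_left _ _ _ _ _ _ _ hf B hB]
        refine hyb_mono _ _ _ _ _ _ _ (smooth_cont L₂ f hf B hB δ) B (smooth_bdd L₂ f B hB δ)
          (smooth_cont L₁ f hf B hB δ) (smooth_bdd L₁ f B hB δ) _ fun w => ?_
        have a1 := abs_le.1 (lind_step L₁ f hf B hB q hq2 K hK hT hi₁ δ w)
        have a2 := abs_le.1 (lind_step L₂ f hf B hB q hq2 K hK hT hi₂ δ w)
        have := mul_le_mul_of_nonneg_left (hQ w) δ.2
        have e : (C₁ + C₂) * Real.sqrt δ ^ 3 = C₁ * Real.sqrt δ ^ 3 + C₂ * Real.sqrt δ ^ 3 := by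
          ring
        have a3 := a1.1
        have a4 := a2.2
        simp only [NNReal.val_eq_coe] at this
        linarith
      have h2 := ih (s + δ) t
      have e : s + δ + j * δ = s + (j + 1 : ℕ) * δ := by push_cast; ring
      rw [e] at h2
      push_cast at h2 h1 ⊢
      linarith
  have h01 : hyb L₁ L₂ f w₀ 0 1 = ∫ x, f (w₀ + L₂ x) ∂(gpi κ₂ 1) := by
    unfold hyb; rw [gpi_zero, integral_dirac]; simp
  have h10 : hyb L₁ L₂ f w₀ 1 0 = ∫ x, f (w₀ + L₁ x) ∂(gpi κ₁ 1) := by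
    unfold hyb; rw [gpi_zero]; simp [integral_dirac]
  have lim : Tendsto (fun N : ℕ => ∫ x, f (w₀ + L₁ x) ∂(gpi κ₁ 1) +
      (C₁ + C₂) * Real.sqrt (1 / ((N : ℝ) + 1))) atTop
      (nhds (∫ x, f (w₀ + L₁ x) ∂(gpi κ₁ 1) + (C₁ + C₂) * Real.sqrt 0)) :=
    ((Real.continuous_sqrt.tendsto 0).comp
      tendsto_one_div_add_atTop_nhds_zero_nat).const_mul _ |>.const_add _
  rw [Real.sqrt_zero, mul_zero, add_zero] at lim
  refine ge_of_tendsto' lim fun N => ?_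
  have h := key (1 / ((N : NNReal) + 1)) (N + 1) 0 0
  have e : ((N + 1 : ℕ) : NNReal) * (1 / ((N : NNReal) + 1)) = 1 := by
    push_cast; field_simp
  rw [e, zero_add, h01, h10] at h
  refine h.trans (le_of_eq ?_)
  congr 1
  have e2 : (((1 / ((N : NNReal) + 1)) : NNReal) : ℝ) = 1 / ((N : ℝ) + 1) := by push_cast; rfl
  rw [e2]
  have hp : (0 : ℝ) < (N : ℝ) + 1 := by positivity
  have e3 : Real.sqrt (1 / ((N : ℝ) + 1)) ^ 2 = 1 / ((N : ℝ) + 1) := Real.sq_sqrt (by positivity)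
  rw [pow_succ, e3]
  push_cast
  field_simp
end



lemma taylor_sym (φ φ1 φ2 φ3 : ℝ → ℝ) (h1 : ∀ s, HasDerivAt φ (φ1 s) s)
    (h2 : ∀ s, HasDerivAt φ1 (φ2 s) s) (h3 : ∀ s, HasDerivAt φ2 (φ3 s) s) (C : ℝ)
    (hC : ∀ s, |φ3 s| ≤ C) : |φ 1 + φ (-1) - 2 * φ 0 - φ2 0| ≤ 2 * C := by
  have hC0 : 0 ≤ C := (abs_nonneg _).trans (hC 0)
  have l2 : ∀ s ∈ Set.Icc (0 : ℝ) 1, |φ2 s + φ2 (-s) - 2 * φ2 0| ≤ 2 * C := by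
    intro s hs
    have := norm_image_sub_le_of_norm_deriv_le_segment' (a := 0) (b := 1)
      (f := fun s => φ2 s + φ2 (-s) - 2 * φ2 0) (f' := fun s => φ3 s + φ3 (-s) * (-1) ) (C := 2 * C)
      (fun x _ => (((h3 x).add ((h3 (-x)).comp x (hasDerivAt_neg x))).sub_const _).hasDerivWithinAt)
      (fun x _ => by
        have a := hC x
        have b := hC (-x)
        rw [Real.norm_eq_abs]
        rw [abs_le] at *
        constructor <;> linarith [a.1, a.2, b.1, b.2]) s hs
    simp only [Real.norm_eq_abs, neg_zero] at this
    rw [show φ2 0 + φ2 0 - 2 * φ2 0 = 0 by ring, sub_zero] at this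
    nlinarith [hs.1, hs.2]
  have l1 : ∀ s ∈ Set.Icc (0 : ℝ) 1, |φ1 s - φ1 (-s) - 2 * s * φ2 0| ≤ 2 * C := by
    intro s hs
    have := norm_image_sub_le_of_norm_deriv_le_segment' (a := 0) (b := 1)
      (f := fun s => φ1 s - φ1 (-s) - 2 * s * φ2 0)
      (f' := fun s => φ2 s - φ2 (-s) * (-1) - 2 * 1 * φ2 0 ) (C := 2 * C)
      (fun x _ => (((h2 x).sub ((h2 (-x)).comp x (hasDerivAt_neg x))).sub
        (((hasDerivAt_id x).const_mul 2).mul_const _)).hasDerivWithinAt)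
      (fun x hx => by
        have a := l2 x ⟨hx.1, hx.2.le⟩
        rw [Real.norm_eq_abs]
        convert a using 2
        ring) s hs
    simp only [Real.norm_eq_abs, neg_zero] at this
    rw [show φ1 0 - φ1 0 - 2 * 0 * φ2 0 = 0 by ring, sub_zero] at this
    nlinarith [hs.1, hs.2]
  have := norm_image_sub_le_of_norm_deriv_le_segment' (a := 0) (b := 1)
      (f := fun s => φ s + φ (-s) - s ^ 2 * φ2 0)
      (f' := fun s => φ1 s + φ1 (-s) * (-1) - (2 : ℕ) * s ^ (2 - 1) * φ2 0 ) (C := 2 * C)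
      (fun x _ => (((h1 x).add ((h1 (-x)).comp x (hasDerivAt_neg x))).sub
        ((hasDerivAt_pow 2 x).mul_const _)).hasDerivWithinAt)
      (fun x hx => by
        have a := l1 x ⟨hx.1, hx.2.le⟩
        rw [Real.norm_eq_abs]
        convert a using 2
        push_cast
        ring) 1 ⟨zero_le_one, le_rfl⟩
  simp only [Real.norm_eq_abs, neg_zero] at this
  rw [show φ 1 + φ (-1) - 2 * φ 0 - φ2 0 =
    φ 1 + φ (-1) - 1 ^ 2 * φ2 0 - (φ 0 + φ 0 - 0 ^ 2 * φ2 0) by ring]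
  refine this.trans (le_of_eq (by ring))

/-- cutoff data: three bounded derivatives -/
structure Smooth3 (f f1 f2 f3 : ℝ → ℝ) (b : ℝ) : Prop where
  d1 : ∀ s, HasDerivAt f (f1 s) s
  d2 : ∀ s, HasDerivAt f1 (f2 s) s
  d3 : ∀ s, HasDerivAt f2 (f3 s) s
  b0 : 0 ≤ b
  b1 : ∀ s, |f1 s| ≤ b
  b2 : ∀ s, |f2 s| ≤ b
  b3 : ∀ s, |f3 s| ≤ b

section
variable {n : ℕ} {ι : Type} [Fintype ι]

/-- the smoothed functional -/
def ff (k p : ℝ → ℝ) (v : (Fin n → ι → ℝ) × (ι → ℝ)) : ℝ :=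
  Real.exp (∑ u, k (∑ i, p (v.1 i u) + v.2 u))

/-- first order change of the inner sum -/
def zz (p1 : ℝ → ℝ) (w v : (Fin n → ι → ℝ) × (ι → ℝ)) (u : ι) : ℝ :=
  ∑ i, p1 (w.1 i u) * v.1 i u + v.2 u

/-- second order term -/
def qq (k k1 k2 p p1 p2 : ℝ → ℝ) (w v : (Fin n → ι → ℝ) × (ι → ℝ)) : ℝ :=
  (1 / 2) * (ff k p w * (∑ u, (k2 (∑ i, p (w.1 i u) + w.2 u) * zz p1 w v u ^ 2 +
    k1 (∑ i, p (w.1 i u) + w.2 u) * ∑ i, p2 (w.1 i u) * v.1 i u ^ 2) +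
    (∑ u, k1 (∑ i, p (w.1 i u) + w.2 u) * zz p1 w v u) ^ 2))

lemma abs_sum_le_card {ι : Type} [Fintype ι] (f : ι → ℝ) (B : ℝ) (h : ∀ i, |f i| ≤ B) :
    |∑ i, f i| ≤ Fintype.card ι * B := by
  refine (Finset.abs_sum_le_sum_abs _ _).trans ?_
  refine (Finset.sum_le_card_nsmul _ _ B fun i _ => h i).trans ?_
  simp

lemma hasDerivAt_line {p p1 : ℝ → ℝ} (h : ∀ s, HasDerivAt p (p1 s) s) (a x s : ℝ) :
    HasDerivAt (fun s => p (a + s * x)) (p1 (a + s * x) * x) s := by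
  have : HasDerivAt (fun s : ℝ => a + s * x) x s := by
    simpa using ((hasDerivAt_id s).mul_const x).const_add a
  exact (h _).comp s this

theorem ff_taylor (k k1 k2 k3 p p1 p2 p3 : ℝ → ℝ) (b c : ℝ) (hk : Smooth3 k k1 k2 k3 b)
    (hp : Smooth3 p p1 p2 p3 c) (hk0 : ∀ s, k s ≤ 0) :
    ∃ K : ℝ, 0 ≤ K ∧ ∀ w v : (Fin n → ι → ℝ) × (ι → ℝ),
      |ff k p (w + v) + ff k p (w - v) - 2 * ff k p w - 2 * qq k k1 k2 p p1 p2 w v|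
        ≤ 2 * K * ‖v‖ ^ 3 := by
  have hb := hk.b0
  have hc := hp.b0
  set M : ℝ := n * c + 1 with hM
  have hM1 : 1 ≤ M := by rw [hM]; nlinarith [(Nat.cast_nonneg n : (0 : ℝ) ≤ n)]
  have hM0 : 0 ≤ M := zero_le_one.trans hM1
  set N : ℝ := ((Fintype.card ι : ℕ) : ℝ)
  have hN : 0 ≤ N := Nat.cast_nonneg _
  set Q1 := N * (b * M)
  set Q2 := N * (b * M ^ 2 + b * M)
  set Q3 := N * (b * M ^ 3 + 3 * (b * M * M) + b * M)
  refine ⟨Q3 + 3 * (Q1 * Q2) + Q1 ^ 3, by positivity, fun w v => ?_⟩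
  set R := ‖v‖
  have hR : 0 ≤ R := norm_nonneg v
  have hx : ∀ i u, |v.1 i u| ≤ R := fun i u =>
    ((norm_le_pi_norm (v.1 i) u).trans (norm_le_pi_norm v.1 i)).trans (norm_fst_le v)
  have hy : ∀ u, |v.2 u| ≤ R := fun u => (norm_le_pi_norm v.2 u).trans (norm_snd_le v)
  let z0 : ι → ℝ → ℝ := fun u s => ∑ i, p (w.1 i u + s * v.1 i u) + (w.2 u + s * v.2 u)
  let z1 : ι → ℝ → ℝ := fun u s => ∑ i, p1 (w.1 i u + s * v.1 i u) * v.1 i u + v.2 u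
  let z2 : ι → ℝ → ℝ := fun u s => ∑ i, p2 (w.1 i u + s * v.1 i u) * v.1 i u * v.1 i u
  let z3 : ι → ℝ → ℝ := fun u s => ∑ i, p3 (w.1 i u + s * v.1 i u) * v.1 i u * v.1 i u * v.1 i u
  have hz0 : ∀ u s, HasDerivAt (z0 u) (z1 u s) s := fun u s => by
    refine HasDerivAt.add (HasDerivAt.fun_sum fun i _ => hasDerivAt_line hp.d1 _ _ _) ?_
    simpa using ((hasDerivAt_id s).mul_const (v.2 u)).const_add (w.2 u)
  have hz1 : ∀ u s, HasDerivAt (z1 u) (z2 u s) s := fun u s =>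
    (HasDerivAt.fun_sum fun i _ => (hasDerivAt_line hp.d2 _ _ _).mul_const _).add_const _
  have hz2 : ∀ u s, HasDerivAt (z2 u) (z3 u s) s := fun u s =>
    (HasDerivAt.fun_sum fun i _ => ((hasDerivAt_line hp.d3 _ _ _).mul_const _).mul_const _)
  have bz1 : ∀ u s, |z1 u s| ≤ M * R := fun u s => by
    have : |∑ i, p1 (w.1 i u + s * v.1 i u) * v.1 i u| ≤ Fintype.card (Fin n) * (c * R) := by
      refine abs_sum_le_card _ _ fun i => ?_
      rw [abs_mul]
      exact mul_le_mul (hp.b1 _) (hx i u) (abs_nonneg _) hc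
    rw [Fintype.card_fin] at this
    calc |z1 u s| ≤ _ := abs_add_le _ _
      _ ≤ n * (c * R) + R := add_le_add this (hy u)
      _ = M * R := by rw [hM]; ring
  have bz2 : ∀ u s, |z2 u s| ≤ M * R ^ 2 := fun u s => by
    have : |z2 u s| ≤ Fintype.card (Fin n) * (c * R * R) := by
      refine abs_sum_le_card _ _ fun i => ?_
      rw [abs_mul, abs_mul]
      have := hx i u
      have := hp.b2 (w.1 i u + s * v.1 i u)
      gcongr
    rw [Fintype.card_fin] at this
    refine this.trans ?_
    rw [hM]; nlinarith [sq_nonneg R]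
  have bz3 : ∀ u s, |z3 u s| ≤ M * R ^ 3 := fun u s => by
    have : |z3 u s| ≤ Fintype.card (Fin n) * (c * R * R * R) := by
      refine abs_sum_le_card _ _ fun i => ?_
      rw [abs_mul, abs_mul, abs_mul]
      have := hx i u
      have := hp.b3 (w.1 i u + s * v.1 i u)
      gcongr
    rw [Fintype.card_fin] at this
    refine this.trans ?_
    rw [hM]; nlinarith [pow_nonneg hR 3]
  let q0 : ℝ → ℝ := fun s => ∑ u, k (z0 u s)
  let q1 : ℝ → ℝ := fun s => ∑ u, k1 (z0 u s) * z1 u s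
  let q2 : ℝ → ℝ := fun s => ∑ u, (k2 (z0 u s) * z1 u s * z1 u s + k1 (z0 u s) * z2 u s)
  let q3 : ℝ → ℝ := fun s => ∑ u, (((k3 (z0 u s) * z1 u s * z1 u s + k2 (z0 u s) * z2 u s) * z1 u s
      + k2 (z0 u s) * z1 u s * z2 u s) + (k2 (z0 u s) * z1 u s * z2 u s + k1 (z0 u s) * z3 u s))
  have hq0 : ∀ s, HasDerivAt q0 (q1 s) s := fun s =>
    HasDerivAt.fun_sum fun u _ => (hk.d1 _).comp s (hz0 u s)
  have hq1 : ∀ s, HasDerivAt q1 (q2 s) s := fun s =>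
    HasDerivAt.fun_sum fun u _ => ((hk.d2 _).comp s (hz0 u s)).mul (hz1 u s)
  have hq2 : ∀ s, HasDerivAt q2 (q3 s) s := fun s =>
    HasDerivAt.fun_sum fun u _ => ((((hk.d3 _).comp s (hz0 u s)).mul (hz1 u s)).mul (hz1 u s)).add
      (((hk.d2 _).comp s (hz0 u s)).mul (hz2 u s))
  have bq1 : ∀ s, |q1 s| ≤ Q1 * R := fun s => by
    have : |q1 s| ≤ N * (b * (M * R)) := by
      refine abs_sum_le_card _ _ fun u => ?_
      rw [abs_mul]
      exact mul_le_mul (hk.b1 _) (bz1 u s) (abs_nonneg _) hb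
    refine this.trans (le_of_eq ?_)
    ring
  have bq2 : ∀ s, |q2 s| ≤ Q2 * R ^ 2 := fun s => by
    have : |q2 s| ≤ N * (b * (M * R) * (M * R) + b * (M * R ^ 2)) := by
      refine abs_sum_le_card _ _ fun u => ?_
      refine (abs_add_le _ _).trans ?_
      rw [abs_mul, abs_mul, abs_mul]
      have := bz1 u s
      have := bz2 u s
      have := hk.b1 (z0 u s)
      have := hk.b2 (z0 u s)
      gcongr
    refine this.trans (le_of_eq ?_)
    ring
  have bq3 : ∀ s, |q3 s| ≤ Q3 * R ^ 3 := fun s => by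
    have : |q3 s| ≤ N * (((b * (M * R) * (M * R) + b * (M * R ^ 2)) * (M * R) +
        b * (M * R) * (M * R ^ 2)) + (b * (M * R) * (M * R ^ 2) + b * (M * R ^ 3))) := by
      refine abs_sum_le_card _ _ fun u => ?_
      have h1 := bz1 u s
      have h2 := bz2 u s
      have h3 := bz3 u s
      have g1 := hk.b1 (z0 u s)
      have g2 := hk.b2 (z0 u s)
      have g3 := hk.b3 (z0 u s)
      refine (abs_add_le _ _).trans (add_le_add ((abs_add_le _ _).trans (add_le_add ?_ ?_))
        ((abs_add_le _ _).trans (add_le_add ?_ ?_)))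
      · rw [abs_mul]
        refine mul_le_mul ((abs_add_le _ _).trans (add_le_add ?_ ?_)) h1 (abs_nonneg _)
          (by positivity)
        · rw [abs_mul, abs_mul]; gcongr
        · rw [abs_mul]; gcongr
      · rw [abs_mul, abs_mul]; gcongr
      · rw [abs_mul, abs_mul]; gcongr
      · rw [abs_mul]; gcongr
    refine this.trans (le_of_eq ?_)
    ring
  have he : ∀ s, |Real.exp (q0 s)| ≤ 1 := fun s => by
    rw [abs_of_pos (Real.exp_pos _)]
    exact Real.exp_le_one_iff.2 (Finset.sum_nonpos fun u _ => hk0 _)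
  have T := taylor_sym (fun s => Real.exp (q0 s)) (fun s => Real.exp (q0 s) * q1 s)
    (fun s => Real.exp (q0 s) * q1 s * q1 s + Real.exp (q0 s) * q2 s)
    (fun s => (((Real.exp (q0 s) * q1 s * q1 s + Real.exp (q0 s) * q2 s) * q1 s
      + Real.exp (q0 s) * q1 s * q2 s)) + (Real.exp (q0 s) * q1 s * q2 s + Real.exp (q0 s) * q3 s))
    (fun s => (hq0 s).exp) (fun s => (hq0 s).exp.mul (hq1 s))
    (fun s => (((hq0 s).exp.mul (hq1 s)).mul (hq1 s)).add ((hq0 s).exp.mul (hq2 s)))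
    ((Q3 + 3 * (Q1 * Q2) + Q1 ^ 3) * R ^ 3) (fun s => by
      have e : ((Real.exp (q0 s) * q1 s * q1 s + Real.exp (q0 s) * q2 s) * q1 s
        + Real.exp (q0 s) * q1 s * q2 s) + (Real.exp (q0 s) * q1 s * q2 s + Real.exp (q0 s) * q3 s)
        = Real.exp (q0 s) * (q3 s + 3 * (q1 s * q2 s) + q1 s ^ 3) := by ring
      rw [e, abs_mul]
      have h1 := bq1 s
      have h2 := bq2 s
      have h3 := bq3 s
      have : |q3 s + 3 * (q1 s * q2 s) + q1 s ^ 3| ≤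
          Q3 * R ^ 3 + 3 * ((Q1 * R) * (Q2 * R ^ 2)) + (Q1 * R) ^ 3 := by
        refine (abs_add_le _ _).trans (add_le_add ((abs_add_le _ _).trans (add_le_add h3 ?_)) ?_)
        · rw [abs_mul, abs_mul, abs_of_pos (by norm_num : (0 : ℝ) < 3)]; gcongr
        · rw [abs_pow]; gcongr
      calc _ ≤ 1 * (Q3 * R ^ 3 + 3 * ((Q1 * R) * (Q2 * R ^ 2)) + (Q1 * R) ^ 3) :=
            mul_le_mul (he s) this (abs_nonneg _) zero_le_one
        _ = _ := by ring)
  have e0 : Real.exp (q0 0) = ff k p w := by simp [q0, z0, ff]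
  have e1 : Real.exp (q0 1) = ff k p (w + v) := by simp [q0, z0, ff]
  have e2 : Real.exp (q0 (-1)) = ff k p (w - v) := by simp [q0, z0, ff, sub_eq_add_neg]
  have e3 : Real.exp (q0 0) * q1 0 * q1 0 + Real.exp (q0 0) * q2 0 =
      2 * qq k k1 k2 p p1 p2 w v := by
    rw [e0]
    have a1 : q1 0 = ∑ u, k1 (∑ i, p (w.1 i u) + w.2 u) * zz p1 w v u := by
      simp [q1, z0, z1, zz]
    have a2 : q2 0 = ∑ u, (k2 (∑ i, p (w.1 i u) + w.2 u) * zz p1 w v u ^ 2 +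
        k1 (∑ i, p (w.1 i u) + w.2 u) * ∑ i, p2 (w.1 i u) * v.1 i u ^ 2) := by
      simp [q2, z0, z1, z2, zz, mul_assoc, sq]
    rw [a1, a2, qq]; ring
  simp only [e0, e1, e2] at T e3
  rw [e3] at T
  refine T.trans (le_of_eq ?_)
  ring

lemma qq_smul (k k1 k2 p p1 p2 : ℝ → ℝ) (w : (Fin n → ι → ℝ) × (ι → ℝ)) (c : ℝ)
    (v : (Fin n → ι → ℝ) × (ι → ℝ)) :
    qq k k1 k2 p p1 p2 w (c • v) = c ^ 2 * qq k k1 k2 p p1 p2 w v := by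
  have hz : ∀ u, zz p1 w (c • v) u = c * zz p1 w v u := fun u => by
    simp only [zz, Prod.smul_fst, Prod.smul_snd, Pi.smul_apply, smul_eq_mul, mul_add, mul_sum]
    congr 1
    exact Finset.sum_congr rfl fun i _ => by ring
  have h2 : ∀ u, ∑ i, p2 (w.1 i u) * (c • v).1 i u ^ 2 =
      c ^ 2 * ∑ i, p2 (w.1 i u) * v.1 i u ^ 2 := fun u => by
    simp only [Prod.smul_fst, Pi.smul_apply, smul_eq_mul, mul_sum]
    exact Finset.sum_congr rfl fun i _ => by ring
  have h1 : ∑ u, k1 (∑ i, p (w.1 i u) + w.2 u) * zz p1 w (c • v) u =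
      c * ∑ u, k1 (∑ i, p (w.1 i u) + w.2 u) * zz p1 w v u := by
    simp only [hz, mul_sum]
    exact Finset.sum_congr rfl fun i _ => by ring
  have h3 : ∑ u, (k2 (∑ i, p (w.1 i u) + w.2 u) * zz p1 w (c • v) u ^ 2 +
      k1 (∑ i, p (w.1 i u) + w.2 u) * ∑ i, p2 (w.1 i u) * (c • v).1 i u ^ 2) =
      c ^ 2 * ∑ u, (k2 (∑ i, p (w.1 i u) + w.2 u) * zz p1 w v u ^ 2 +
      k1 (∑ i, p (w.1 i u) + w.2 u) * ∑ i, p2 (w.1 i u) * v.1 i u ^ 2) := by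
    rw [mul_sum]
    refine Finset.sum_congr rfl fun u _ => ?_
    rw [h2, hz]; ring
  rw [qq, h1, h3, qq]; ring
end



section
variable {n d : ℕ} {ι : Type} [Fintype ι]

/-- linear functional with variance `σ` -/
def LinVar {κ : Type} [Fintype κ] (g : (κ → ℝ) → ℝ) (σ : ℝ) : Prop :=
  ∃ c : κ → ℝ, (∀ x, g x = ∑ k, c k * x k) ∧ ∑ k, c k ^ 2 = σ

lemma LinVar.integrable {κ : Type} [Fintype κ] {g : (κ → ℝ) → ℝ} {σ : ℝ} (h : LinVar g σ) :
    Integrable (fun x => g x ^ 2) (gpi κ 1) := by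
  obtain ⟨c, hc, _⟩ := h
  simp only [hc]; exact gpi_lin_sq_integrable κ c

lemma LinVar.integral {κ : Type} [Fintype κ] {g : (κ → ℝ) → ℝ} {σ : ℝ} (h : LinVar g σ) :
    ∫ x, g x ^ 2 ∂(gpi κ 1) = σ := by
  obtain ⟨c, hc, hs⟩ := h
  simp only [hc]; rw [gpi_lin_sq, hs]

lemma qq_integral {κ : Type} [Fintype κ] (L : (κ → ℝ) → (Fin n → ι → ℝ) × (ι → ℝ))
    (k k1 k2 p p1 p2 : ℝ → ℝ) (w : (Fin n → ι → ℝ) × (ι → ℝ)) (A : Fin n → ι → ℝ) (Z : ι → ℝ) (T : ℝ)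
    (hA : ∀ i u, LinVar (fun x => (L x).1 i u) (A i u))
    (hZ : ∀ u, LinVar (fun x => zz p1 w (L x) u) (Z u))
    (hT : LinVar (fun x => ∑ u, k1 (∑ i, p (w.1 i u) + w.2 u) * zz p1 w (L x) u) T) :
    Integrable (fun x => qq k k1 k2 p p1 p2 w (L x)) (gpi κ 1) ∧
    ∫ x, qq k k1 k2 p p1 p2 w (L x) ∂(gpi κ 1) =
      (1 / 2) * (ff k p w * (∑ u, (k2 (∑ i, p (w.1 i u) + w.2 u) * Z u +
    k1 (∑ i, p (w.1 i u) + w.2 u) * ∑ i, p2 (w.1 i u) * A i u) + T)) := by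
  unfold qq
  have i1 : ∀ u, Integrable (fun x => ∑ i, p2 (w.1 i u) * (L x).1 i u ^ 2) (gpi κ 1) := fun u =>
    integrable_finsetSum _ fun i _ => (hA i u).integrable.const_mul _
  have e1 : ∀ u, ∫ x, ∑ i, p2 (w.1 i u) * (L x).1 i u ^ 2 ∂(gpi κ 1) =
      ∑ i, p2 (w.1 i u) * A i u := fun u => by
    rw [integral_finsetSum _ fun i _ => (hA i u).integrable.const_mul _]
    exact Finset.sum_congr rfl fun i _ => by rw [integral_const_mul, (hA i u).integral]
  have i2 : ∀ u, Integrable (fun x => (k2 (∑ i, p (w.1 i u) + w.2 u) * zz p1 w (L x) u ^ 2 +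
    k1 (∑ i, p (w.1 i u) + w.2 u) * ∑ i, p2 (w.1 i u) * (L x).1 i u ^ 2)) (gpi κ 1) := fun u =>
    ((hZ u).integrable.const_mul _).add ((i1 u).const_mul _)
  have e2 : ∀ u, ∫ x, (k2 (∑ i, p (w.1 i u) + w.2 u) * zz p1 w (L x) u ^ 2 +
    k1 (∑ i, p (w.1 i u) + w.2 u) * ∑ i, p2 (w.1 i u) * (L x).1 i u ^ 2) ∂(gpi κ 1) =
     k2 (∑ i, p (w.1 i u) + w.2 u) * Z u +
    k1 (∑ i, p (w.1 i u) + w.2 u) * ∑ i, p2 (w.1 i u) * A i u := fun u => by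
    rw [integral_add ((hZ u).integrable.const_mul _) ((i1 u).const_mul _), integral_const_mul,
      integral_const_mul, e1, (hZ u).integral]
  have i3 := integrable_finsetSum univ fun u _ => i2 u
  have i4 := hT.integrable
  refine ⟨((i3.add i4).const_mul _).const_mul _, ?_⟩
  rw [integral_const_mul, integral_const_mul, integral_add i3 i4, hT.integral,
    integral_finsetSum _ fun u _ => i2 u]
  simp only [e2]

/-- original process -/
def LX (U : ι → Fin d → ℝ) (r : ι → ℝ) :
    ((Fin n × Fin d) ⊕ Unit → ℝ) →L[ℝ] (Fin n → ι → ℝ) × (ι → ℝ) :=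
  LinearMap.toContinuousLinearMap
    { toFun := fun x => (fun i u => ∑ j, x (Sum.inl (i, j)) * U u j,
        fun u => Real.sqrt n * r u * x (Sum.inr ()))
      map_add' := fun x y => by
        ext <;> simp [add_mul, mul_add, sum_add_distrib]
      map_smul' := fun c x => by
        ext <;> simp [mul_sum, mul_assoc, mul_left_comm] }

/-- comparison process -/
def LY (U : ι → Fin d → ℝ) (r : ι → ℝ) :
    (Fin n ⊕ Fin d → ℝ) →L[ℝ] (Fin n → ι → ℝ) × (ι → ℝ) :=
  LinearMap.toContinuousLinearMap
    { toFun := fun x => (fun i u => r u * x (Sum.inl i),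
        fun u => Real.sqrt n * ∑ j, x (Sum.inr j) * U u j)
      map_add' := fun x y => by
        ext <;> simp [add_mul, mul_add, sum_add_distrib]
      map_smul' := fun c x => by
        ext <;> simp [mul_sum, mul_assoc, mul_left_comm] }

lemma LX_fst (U : ι → Fin d → ℝ) (r : ι → ℝ) (x : (Fin n × Fin d) ⊕ Unit → ℝ) (i : Fin n) (u : ι) :
    (LX U r x).1 i u = ∑ j, x (Sum.inl (i, j)) * U u j := rfl
lemma LX_snd (U : ι → Fin d → ℝ) (r : ι → ℝ) (x : (Fin n × Fin d) ⊕ Unit → ℝ) (u : ι) :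
    (LX U r x).2 u = Real.sqrt n * r u * x (Sum.inr ()) := rfl
lemma LY_fst (U : ι → Fin d → ℝ) (r : ι → ℝ) (x : Fin n ⊕ Fin d → ℝ) (i : Fin n) (u : ι) :
    (LY U r x).1 i u = r u * x (Sum.inl i) := rfl
lemma LY_snd (U : ι → Fin d → ℝ) (r : ι → ℝ) (x : Fin n ⊕ Fin d → ℝ) (u : ι) :
    (LY U r x).2 u = Real.sqrt n * ∑ j, x (Sum.inr j) * U u j := rfl

lemma LX_var (U : ι → Fin d → ℝ) (r : ι → ℝ) (a : Fin n → ι → ℝ) (b : ι → ℝ) :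
    LinVar (fun x => ∑ u, (∑ i, a i u * (LX (n := n) U r x).1 i u + b u * (LX (n := n) U r x).2 u))
      (∑ i, ∑ j, (∑ u, a i u * U u j) ^ 2 + n * (∑ u, b u * r u) ^ 2) := by
  refine ⟨Sum.elim (fun q => ∑ u, a q.1 u * U u q.2) (fun _ => Real.sqrt n * ∑ u, b u * r u),
    fun x => ?_, ?_⟩
  · simp only [LX_fst, LX_snd, Fintype.sum_sum_type, Sum.elim_inl, Sum.elim_inr,
      Fintype.sum_prod_type, sum_add_distrib]
    congr 1
    · rw [Finset.sum_comm]
      refine Finset.sum_congr rfl fun i _ => ?_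
      simp only [mul_sum, sum_mul]
      rw [Finset.sum_comm]
      exact Finset.sum_congr rfl fun j _ => Finset.sum_congr rfl fun u _ => by ring
    · simp only [univ_unique, sum_singleton, mul_sum, sum_mul]
      exact Finset.sum_congr rfl fun u _ => by simp; ring
  · simp only [Fintype.sum_sum_type, Sum.elim_inl, Sum.elim_inr,
      Fintype.sum_prod_type]
    simp [mul_pow]

lemma LY_var (U : ι → Fin d → ℝ) (r : ι → ℝ) (a : Fin n → ι → ℝ) (b : ι → ℝ) :
    LinVar (fun x => ∑ u, (∑ i, a i u * (LY (n := n) U r x).1 i u + b u * (LY (n := n) U r x).2 u))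
      (∑ i, (∑ u, a i u * r u) ^ 2 + n * ∑ j, (∑ u, b u * U u j) ^ 2) := by
  refine ⟨Sum.elim (fun i => ∑ u, a i u * r u) (fun j => Real.sqrt n * ∑ u, b u * U u j),
    fun x => ?_, ?_⟩
  · simp only [LY_fst, LY_snd, Fintype.sum_sum_type, Sum.elim_inl, Sum.elim_inr,
      sum_add_distrib]
    congr 1
    · rw [Finset.sum_comm]
      refine Finset.sum_congr rfl fun i _ => ?_
      simp only [sum_mul]
      exact Finset.sum_congr rfl fun u _ => by ring
    · simp only [mul_sum, sum_mul]
      rw [Finset.sum_comm]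
      exact Finset.sum_congr rfl fun j _ => Finset.sum_congr rfl fun u _ => by ring
  · simp only [Fintype.sum_sum_type, Sum.elim_inl, Sum.elim_inr]
    simp [mul_pow, ← mul_sum]

lemma single_eq [DecidableEq ι] (f : ι → ℝ) (u : ι) : ∑ v, (if v = u then (1 : ℝ) else 0) * f v = f u := by
  simp

lemma gordon_ineq (U : ι → Fin d → ℝ) (r : ι → ℝ) (hr0 : ∀ u, 0 ≤ r u)
    (hr : ∀ u, ∑ j, U u j ^ 2 = r u ^ 2) (m : ι → ℝ) (hm : ∀ u, 0 ≤ m u) (α : ι → ℝ)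
    (hα : ∀ u, |α u| ≤ 1) :
    (∑ u, m u * α u * r u) ^ 2 + ∑ j, (∑ u, m u * U u j) ^ 2 ≤
      ∑ j, (∑ u, m u * α u * U u j) ^ 2 + (∑ u, m u * r u) ^ 2 := by
  have cs : ∀ u v, ∑ j, U u j * U v j ≤ r u * r v := fun u v => by
    have h := Finset.sum_mul_sq_le_sq_mul_sq univ (U u) (U v)
    rw [hr, hr, ← mul_pow] at h
    exact le_of_sq_le_sq h (mul_nonneg (hr0 u) (hr0 v)) 
  have ex : ∀ a : ι → ℝ, ∑ j, (∑ u, a u * U u j) ^ 2 =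
      ∑ u, ∑ v, a u * a v * ∑ j, U u j * U v j := fun a => by
    simp only [sq, Finset.sum_mul_sum]
    simp only [mul_sum]
    rw [Finset.sum_comm]
    refine Finset.sum_congr rfl fun u _ => ?_
    rw [Finset.sum_comm]
    exact Finset.sum_congr rfl fun v _ => Finset.sum_congr rfl fun j _ => by ring
  have ex2 : ∀ a : ι → ℝ, (∑ u, a u * r u) ^ 2 = ∑ u, ∑ v, a u * a v * (r u * r v) := fun a => by
    simp only [sq, Finset.sum_mul_sum]
    exact Finset.sum_congr rfl fun v _ => Finset.sum_congr rfl fun j _ => by ring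
  rw [ex, ex, ex2, ex2, ← sum_add_distrib, ← sum_add_distrib]
  refine Finset.sum_le_sum fun u _ => ?_
  rw [← sum_add_distrib, ← sum_add_distrib]
  refine Finset.sum_le_sum fun v _ => ?_
  have h1 : α u * α v ≤ 1 := by
    refine (le_abs_self _).trans ?_
    rw [abs_mul]; exact mul_le_one₀ (hα u) (abs_nonneg _) (hα v)
  have h2 := mul_nonneg (mul_nonneg (hm u) (hm v))
    (mul_nonneg (sub_nonneg.2 h1) (sub_nonneg.2 (cs u v)))
  linarith

theorem comparison (U : ι → Fin d → ℝ) (r : ι → ℝ) (hr0 : ∀ u, 0 ≤ r u)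
    (hr : ∀ u, ∑ j, U u j ^ 2 = r u ^ 2)
    (k k1 k2 k3 p p1 p2 p3 : ℝ → ℝ) (b c : ℝ) (hk : Smooth3 k k1 k2 k3 b)
    (hp : Smooth3 p p1 p2 p3 c) (hk0 : ∀ s, k s ≤ 0) (hk1 : ∀ s, 0 ≤ k1 s) (hp1 : ∀ s, |p1 s| ≤ 1)
    (w₀ : (Fin n → ι → ℝ) × (ι → ℝ)) :
    ∫ x, ff k p (w₀ + LY U r x) ∂(gpi (Fin n ⊕ Fin d) 1) ≤
      ∫ x, ff k p (w₀ + LX U r x) ∂(gpi ((Fin n × Fin d) ⊕ Unit) 1) := by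
  classical
  obtain ⟨K, hK, hT⟩ := ff_taylor (n := n) (ι := ι) k k1 k2 k3 p p1 p2 p3 b c hk hp hk0
  have ck : Continuous k := continuous_iff_continuousAt.2 fun s => (hk.d1 s).continuousAt
  have cp : Continuous p := continuous_iff_continuousAt.2 fun s => (hp.d1 s).continuousAt
  have hf : Continuous (ff (n := n) (ι := ι) k p) := by unfold ff; fun_prop
  have hB : ∀ v, |ff (n := n) (ι := ι) k p v| ≤ 1 := fun v => by
    unfold ff
    rw [abs_of_pos (Real.exp_pos _)]
    exact Real.exp_le_one_iff.2 (Finset.sum_nonpos fun u _ => hk0 _)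
  have hX : ∀ w, _ := fun w => qq_integral (LX (n := n) U r) k k1 k2 p p1 p2 w
    (fun i u => r u ^ 2) (fun u => ∑ i, (p1 (w.1 i u)) ^ 2 * r u ^ 2 + n * r u ^ 2)
    (∑ i, ∑ j, (∑ u, k1 (∑ i, p (w.1 i u) + w.2 u) * p1 (w.1 i u) * U u j) ^ 2
      + n * (∑ u, k1 (∑ i, p (w.1 i u) + w.2 u) * r u) ^ 2)
    (fun i u => by
      convert LX_var (n := n) U r (fun i' v => (if i' = i then 1 else 0) * (if v = u then 1 else 0))
        (fun _ => 0) using 1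
      · ext x; simp
      · simp [hr, mul_assoc, ite_pow, ite_mul])
    (fun u => by
      convert LX_var (n := n) U r (fun i v => (if v = u then 1 else 0) * p1 (w.1 i v))
        (fun v => if v = u then 1 else 0) using 1
      · ext x; simp [zz, sum_add_distrib]
      · simp [mul_pow, ← mul_sum, hr])
    (by
      convert LX_var (n := n) U r (fun i v => k1 (∑ i, p (w.1 i v) + w.2 v) * p1 (w.1 i v))
        (fun v => k1 (∑ i, p (w.1 i v) + w.2 v)) using 1
      ext x; simp [zz, mul_add, mul_sum, mul_assoc])
  have hY : ∀ w, _ := fun w => qq_integral (LY (n := n) U r) k k1 k2 p p1 p2 w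
    (fun i u => r u ^ 2) (fun u => ∑ i, (p1 (w.1 i u)) ^ 2 * r u ^ 2 + n * r u ^ 2)
    (∑ i, (∑ u, k1 (∑ i, p (w.1 i u) + w.2 u) * p1 (w.1 i u) * r u) ^ 2
      + n * ∑ j, (∑ u, k1 (∑ i, p (w.1 i u) + w.2 u) * U u j) ^ 2)
    (fun i u => by
      convert LY_var (n := n) U r (fun i' v => (if i' = i then 1 else 0) * (if v = u then 1 else 0))
        (fun _ => 0) using 1
      · ext x; simp
      · simp [mul_assoc, ite_pow, ite_mul])
    (fun u => by
      convert LY_var (n := n) U r (fun i v => (if v = u then 1 else 0) * p1 (w.1 i v))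
        (fun v => if v = u then 1 else 0) using 1
      · ext x; simp [zz, sum_add_distrib]
      · simp [mul_pow, hr])
    (by
      convert LY_var (n := n) U r (fun i v => k1 (∑ i, p (w.1 i v) + w.2 v) * p1 (w.1 i v))
        (fun v => k1 (∑ i, p (w.1 i v) + w.2 v)) using 1
      ext x; simp [zz, mul_add, mul_sum, mul_assoc])
  refine lindeberg (LX U r) (LY U r) (ff k p) hf 1 hB (qq k k1 k2 p p1 p2)
    (fun w c v => qq_smul _ _ _ _ _ _ w c v) K hK hT (fun w => (hX w).1) (fun w => (hY w).1)
    (fun w => ?_) w₀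
  rw [(hX w).2, (hY w).2]
  have hfp : 0 ≤ ff k p w := (Real.exp_pos _).le
  gcongr (1 / 2) * (ff k p w * (_ + ?_))
  have h := Finset.sum_le_sum (s := univ) fun (i : Fin n) _ =>
    gordon_ineq U r hr0 hr (fun u => k1 (∑ i, p (w.1 i u) + w.2 u)) (fun u => hk1 _)
      (fun u => p1 (w.1 i u)) (fun u => hp1 _)
  simp only [sum_add_distrib, sum_const, card_univ, Fintype.card_fin, nsmul_eq_mul] at h
  exact h
end



lemma trans_smooth : ∃ (T1 T2 T3 : ℝ → ℝ) (b : ℝ), Smooth3 Real.smoothTransition T1 T2 T3 b ∧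
    ∀ s, 0 ≤ T1 s := by
  have hT : ContDiff ℝ 3 Real.smoothTransition := Real.smoothTransition.contDiff (n := 3)
  have h1 : ContDiff ℝ 2 (deriv Real.smoothTransition) := by
    rw [show (3 : WithTop ℕ∞) = 2 + 1 by norm_num] at hT
    exact ((contDiff_succ_iff_deriv).1 hT).2.2
  have h2 : ContDiff ℝ 1 (deriv (deriv Real.smoothTransition)) := by
    rw [show (2 : WithTop ℕ∞) = 1 + 1 by norm_num] at h1
    exact ((contDiff_succ_iff_deriv).1 h1).2.2
  have h3 : Continuous (deriv (deriv (deriv Real.smoothTransition))) :=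
    h2.continuous_deriv le_rfl
  have s1 : HasCompactSupport (deriv Real.smoothTransition) := by
    refine HasCompactSupport.intro (isCompact_Icc (a := (0 : ℝ)) (b := 1)) fun x hx => ?_
    rw [Set.mem_Icc, not_and_or, not_le, not_le] at hx
    rcases hx with hx | hx
    · have : Real.smoothTransition =ᶠ[nhds x] fun _ => 0 := by
        filter_upwards [Iio_mem_nhds hx] with y hy
        exact Real.smoothTransition.zero_of_nonpos (le_of_lt hy)
      rw [this.deriv_eq]; simp
    · have : Real.smoothTransition =ᶠ[nhds x] fun _ => 1 := by
        filter_upwards [Ioi_mem_nhds hx] with y hy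
        exact Real.smoothTransition.one_of_one_le (le_of_lt hy)
      rw [this.deriv_eq]; simp
  have s2 := s1.deriv
  have s3 := s2.deriv
  obtain ⟨b1, hb1⟩ := s1.exists_bound_of_continuous h1.continuous
  obtain ⟨b2, hb2⟩ := s2.exists_bound_of_continuous h2.continuous
  obtain ⟨b3, hb3⟩ := s3.exists_bound_of_continuous h3
  have p1 := (norm_nonneg _).trans (hb1 0)
  have p2 := (norm_nonneg _).trans (hb2 0)
  have p3 := (norm_nonneg _).trans (hb3 0)
  refine ⟨_, _, _, b1 + b2 + b3, ⟨fun s => (hT.differentiable (by norm_num) s).hasDerivAt,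
    fun s => (h1.differentiable (by norm_num) s).hasDerivAt,
    fun s => (h2.differentiable (by norm_num) s).hasDerivAt, by linarith,
    fun s => ?_, fun s => ?_, fun s => ?_⟩, fun s => Real.smoothTransition.monotone.deriv_nonneg⟩
  · have := hb1 s; rw [Real.norm_eq_abs] at this; linarith
  · have := hb2 s; rw [Real.norm_eq_abs] at this; linarith
  · have := hb3 s; rw [Real.norm_eq_abs] at this; linarith

lemma cutoff_smooth (l : ℝ) (K : ℝ) (hK : 0 ≤ K) : ∃ (k1 k2 k3 : ℝ → ℝ) (b : ℝ),
    Smooth3 (fun z => K * (Real.smoothTransition (z - l) - 1)) k1 k2 k3 b ∧ ∀ s, 0 ≤ k1 s := by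
  obtain ⟨T1, T2, T3, b, h, hp⟩ := trans_smooth
  have hs : ∀ {f f1 : ℝ → ℝ}, (∀ s, HasDerivAt f (f1 s) s) → ∀ s,
      HasDerivAt (fun s => K * f (s - l)) (K * f1 (s - l)) s := fun {f f1} hf s => by
    have := ((hf (s - l)).comp s ((hasDerivAt_id s).sub_const l)).const_mul K
    simpa using this
  have hb : ∀ x, |x| ≤ b → |K * x| ≤ K * b := fun x hx => by
    rw [abs_mul, abs_of_nonneg hK]; gcongr
  exact ⟨fun s => K * T1 (s - l), fun s => K * T2 (s - l), fun s => K * T3 (s - l), K * b,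
    ⟨fun s => hs (f := fun z => Real.smoothTransition z - 1) (fun s => (h.d1 s).sub_const 1) s,
      hs h.d2, hs h.d3, mul_nonneg hK h.b0,
      fun s => hb _ (h.b1 _), fun s => hb _ (h.b2 _), fun s => hb _ (h.b3 _)⟩,
    fun s => mul_nonneg hK (hp _)⟩

/-- smooth absolute value -/
def sabs (e x : ℝ) : ℝ := Real.sqrt (e ^ 2 + x ^ 2)

lemma sabs_ge (e x : ℝ) : |x| ≤ sabs e x := Real.abs_le_sqrt (by nlinarith [sq_nonneg e])

lemma sabs_ge' (e x : ℝ) (he : 0 < e) : e ≤ sabs e x := by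
  refine (le_abs_self e).trans (Real.abs_le_sqrt (by nlinarith [sq_nonneg x]))

lemma sabs_le (e x : ℝ) (he : 0 < e) : sabs e x ≤ |x| + e := by
  refine Real.sqrt_le_iff.2 ⟨by positivity, ?_⟩
  nlinarith [sq_abs x, abs_nonneg x]

lemma sabs_smooth (e : ℝ) (he : 0 < e) : ∃ (p1 p2 p3 : ℝ → ℝ) (b : ℝ),
    Smooth3 (sabs e) p1 p2 p3 b ∧ ∀ s, |p1 s| ≤ 1 := by
  have pos : ∀ s, 0 < sabs e s := fun s => he.trans_le (sabs_ge' e s he)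
  have sq : ∀ s, sabs e s ^ 2 = e ^ 2 + s ^ 2 := fun s => Real.sq_sqrt (by positivity)
  have d1 : ∀ s, HasDerivAt (sabs e) (s / sabs e s) s := fun s => by
    have h : HasDerivAt (fun x : ℝ => e ^ 2 + x ^ 2) (2 * s) s := by
      simpa using (hasDerivAt_pow 2 s).const_add (e ^ 2)
    have := h.sqrt (by positivity)
    refine HasDerivAt.congr_deriv (f := sabs e) this ?_
    rw [show Real.sqrt (e ^ 2 + s ^ 2) = sabs e s from rfl]
    have := (pos s).ne'
    field_simp
  have d2 : ∀ s, HasDerivAt (fun s => s / sabs e s) (e ^ 2 / sabs e s ^ 3) s := fun s => by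
    refine ((hasDerivAt_id' s).div (d1 s) (pos s).ne').congr_deriv ?_
    have h0 := (pos s).ne'
    have := sq s
    field_simp
    linarith
  have d3 : ∀ s, HasDerivAt (fun s => e ^ 2 / sabs e s ^ 3) (-3 * e ^ 2 * s / sabs e s ^ 5) s :=
    fun s => by
    refine ((hasDerivAt_const s (e ^ 2)).div ((d1 s).pow 3) (pow_pos (pos s) 3).ne').congr_deriv ?_
    have h0 := (pos s).ne'
    simp
    field_simp
  have b1 : ∀ s, |s / sabs e s| ≤ 1 := fun s => by
    rw [abs_div, abs_of_pos (pos s)]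
    exact div_le_one_of_le₀ (sabs_ge e s) (pos s).le
  refine ⟨_, _, _, 1 + 1 / e + 3 / e ^ 2, ⟨d1, d2, d3, by positivity, fun s => ?_, fun s => ?_,
    fun s => ?_⟩, b1⟩
  · have : (0 : ℝ) ≤ 1 / e + 3 / e ^ 2 := by positivity
    linarith [b1 s]
  · have h1 : |e ^ 2 / sabs e s ^ 3| ≤ 1 / e := by
      rw [abs_of_nonneg (by have := pos s; positivity), div_le_div_iff₀ (pow_pos (pos s) 3) he]
      have := pow_le_pow_left₀ he.le (sabs_ge' e s he) 3
      linarith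
    have : (0 : ℝ) ≤ 1 + 3 / e ^ 2 := by positivity
    linarith
  · have h1 : |-3 * e ^ 2 * s / sabs e s ^ 5| ≤ 3 / e ^ 2 := by
      rw [abs_div, abs_of_pos (pow_pos (pos s) 5), abs_mul,
        div_le_div_iff₀ (pow_pos (pos s) 5) (by positivity), abs_mul,
        abs_of_pos (by positivity : 0 < e ^ 2)]
      norm_num
      have h4 := pow_le_pow_left₀ he.le (sabs_ge' e s he) 4
      have := mul_le_mul h4 (sabs_ge e s) (abs_nonneg s) (by have := pos s; positivity)
      nlinarith
    have : (0 : ℝ) ≤ 1 + 1 / e := by positivity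
    linarith

theorem gordon_prob {n d : ℕ} {ι : Type} [Fintype ι] (U : ι → Fin d → ℝ) (r β : ι → ℝ)
    (hr0 : ∀ u, 0 ≤ r u) (hr : ∀ u, ∑ j, U u j ^ 2 = r u ^ 2) (e : ℝ) (he : 0 < e) (l : ℝ) :
    (gpi (Fin n ⊕ Fin d) 1).real {y | ∀ u, l + 1 ≤ ∑ i, sabs e (β u + r u * y (Sum.inl i)) +
      Real.sqrt n * ∑ j, y (Sum.inr j) * U u j} ≤
    (gpi ((Fin n × Fin d) ⊕ Unit) 1).real {x | ∀ u, l < ∑ i, sabs e (β u +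
      ∑ j, x (Sum.inl (i, j)) * U u j) + Real.sqrt n * r u * x (Sum.inr ())} := by
  set E := {y : Fin n ⊕ Fin d → ℝ | ∀ u, l + 1 ≤ ∑ i, sabs e (β u + r u * y (Sum.inl i)) +
      Real.sqrt n * ∑ j, y (Sum.inr j) * U u j} with hE
  set F := {x : (Fin n × Fin d) ⊕ Unit → ℝ | ∀ u, l < ∑ i, sabs e (β u +
      ∑ j, x (Sum.inl (i, j)) * U u j) + Real.sqrt n * r u * x (Sum.inr ())} with hF
  have hsc : Continuous (sabs e) := by unfold sabs; fun_prop
  have mE : MeasurableSet E := by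
    rw [hE, Set.ofPred_forall]
    exact MeasurableSet.iInter fun u => measurableSet_le measurable_const
      (Continuous.measurable (by fun_prop))
  have mF : MeasurableSet F := by
    rw [hF, Set.ofPred_forall]
    exact MeasurableSet.iInter fun u => measurableSet_lt measurable_const
      (Continuous.measurable (by fun_prop))
  obtain ⟨p1, p2, p3, c, hp, hp1⟩ := sabs_smooth e he
  have main : ∀ N : ℕ, (gpi (Fin n ⊕ Fin d) 1).real E ≤
      (gpi ((Fin n × Fin d) ⊕ Unit) 1).real F + Real.exp (-(N : ℝ)) := by
    intro N
    obtain ⟨k1, k2, k3, b, hk, hk1⟩ := cutoff_smooth l N (Nat.cast_nonneg N)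
    set k : ℝ → ℝ := fun z => N * (Real.smoothTransition (z - l) - 1) with hkdef
    have hk0 : ∀ s, k s ≤ 0 := fun s => mul_nonpos_of_nonneg_of_nonpos (Nat.cast_nonneg N)
      (sub_nonpos.2 (Real.smoothTransition.le_one _))
    have ck : Continuous k := by rw [hkdef]; fun_prop
    have cff : Continuous (ff (n := n) (ι := ι) k (sabs e)) := by unfold ff; fun_prop
    have C := comparison (n := n) U r hr0 hr k k1 k2 k3 (sabs e) p1 p2 p3 b c hk hp hk0 hk1 hp1
      (fun _ u => β u, 0)
    have hff : ∀ v, |ff (n := n) (ι := ι) k (sabs e) v| ≤ 1 := fun v => by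
      unfold ff
      rw [abs_of_pos (Real.exp_pos _)]
      exact Real.exp_le_one_iff.2 (Finset.sum_nonpos fun u _ => hk0 _)
    have h1 : (gpi (Fin n ⊕ Fin d) 1).real E ≤
        ∫ x, ff k (sabs e) ((fun _ u => β u, 0) + LY (n := n) U r x) ∂(gpi (Fin n ⊕ Fin d) 1) := by
      rw [← integral_indicator_one mE]
      refine integral_mono ((integrable_const (1 : ℝ)).indicator mE)
        (int_bdd 1 _ (by fun_prop) 1 fun _ => hff _) fun y => ?_
      by_cases hy : y ∈ E
      · simp only [Set.indicator_of_mem hy, Pi.one_apply]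
        unfold ff
        rw [Finset.sum_eq_zero, Real.exp_zero]
        intro u _
        have := hy u
        simp only [hkdef, Prod.fst_add, Prod.snd_add, Pi.add_apply, LY_fst, LY_snd, Pi.zero_apply,
          zero_add]
        rw [Real.smoothTransition.one_of_one_le (by linarith)]; simp
      · simp only [Set.indicator_of_notMem hy]
        exact (Real.exp_pos _).le
    have h2 : ∫ x, ff k (sabs e) ((fun _ u => β u, 0) + LX (n := n) U r x)
        ∂(gpi ((Fin n × Fin d) ⊕ Unit) 1) ≤
        (gpi ((Fin n × Fin d) ⊕ Unit) 1).real F + Real.exp (-(N : ℝ)) := by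
      have iF : Integrable (F.indicator (1 : ((Fin n × Fin d) ⊕ Unit → ℝ) → ℝ)) (gpi ((Fin n × Fin d) ⊕ Unit) 1) :=
        (integrable_const (1 : ℝ)).indicator mF
      have : (gpi ((Fin n × Fin d) ⊕ Unit) 1).real F + Real.exp (-(N : ℝ)) =
          ∫ x, (F.indicator (1 : ((Fin n × Fin d) ⊕ Unit → ℝ) → ℝ) x + Real.exp (-(N : ℝ)))
            ∂(gpi ((Fin n × Fin d) ⊕ Unit) 1) := by
        rw [integral_add iF (integrable_const _), integral_indicator_one mF]
        simp
      rw [this]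
      refine integral_mono (int_bdd 1 _ (by fun_prop) 1 fun _ => hff _)
        (iF.add (integrable_const _)) fun x => ?_
      by_cases hx : x ∈ F
      · simp only [Set.indicator_of_mem hx, Pi.one_apply]
        have := (abs_le.1 (hff ((fun _ u => β u, 0) + LX (n := n) U r x))).2
        linarith [Real.exp_pos (-(N : ℝ))]
      · simp only [Set.indicator_of_notMem hx, zero_add]
        simp only [hF, Set.mem_ofPred_eq, not_forall, not_lt] at hx
        obtain ⟨u, hu⟩ := hx
        unfold ff
        refine Real.exp_le_exp.2 ?_
        have h3 : ∀ v ∈ univ, k (∑ i, sabs e (((fun _ u => β u, 0) + LX (n := n) U r x).1 i v) +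
          ((fun _ u => β u, 0) + LX (n := n) U r x).2 v) ≤ 0 := fun v _ => hk0 _
        classical
        rw [← Finset.add_sum_erase _ _ (mem_univ u)]
        refine (add_le_of_nonpos_right (Finset.sum_nonpos fun v _ => h3 v (mem_univ v))).trans ?_
        simp only [hkdef, Prod.fst_add, Prod.snd_add, Pi.add_apply, LX_fst, LX_snd, Pi.zero_apply,
          zero_add]
        rw [Real.smoothTransition.zero_of_nonpos (by linarith)]; simp
    exact h1.trans (C.trans h2)
  have lim : Tendsto (fun N : ℕ => (gpi ((Fin n × Fin d) ⊕ Unit) 1).real F + Real.exp (-(N : ℝ)))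
      atTop (nhds ((gpi ((Fin n × Fin d) ⊕ Unit) 1).real F + 0)) :=
    (Real.tendsto_exp_neg_atTop_nhds_zero.comp tendsto_natCast_atTop_atTop).const_add _
  rw [add_zero] at lim
  exact ge_of_tendsto' lim main



lemma gpi_cheb {κ : Type} [Fintype κ] (g : κ → ℝ → ℝ) (hg : ∀ k, MemLp (g k) 2 (gaussianReal 0 1))
    (c : ℝ) (hc : 0 < c) :
    (gpi κ 1).real {x | c ≤ |∑ k, g k (x k) - ∑ k, ∫ t, g k t ∂(gaussianReal 0 1)|} ≤
      (∑ k, Var[g k; gaussianReal 0 1]) / c ^ 2 := by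
  have hv := variance_sum_pi (μ := fun _ : κ => gaussianReal 0 1) hg
  have hm : ∀ k, MemLp (fun x : κ → ℝ => g k (x k)) 2 (Measure.pi fun _ : κ => gaussianReal 0 1) :=
    fun k => (hg k).comp_measurePreserving (measurePreserving_eval (fun _ : κ => gaussianReal 0 1) k)
  have hM : MemLp (∑ k, fun x : κ → ℝ => g k (x k)) 2 (Measure.pi fun _ : κ => gaussianReal 0 1) :=
    memLp_finsetSum' _ fun k _ => hm k
  have h := meas_ge_le_variance_div_sq hM hc
  have hE : ∫ x, (∑ k, fun x : κ → ℝ => g k (x k)) x ∂(Measure.pi fun _ : κ => gaussianReal 0 1) =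
      ∑ k, ∫ t, g k t ∂(gaussianReal 0 1) := by
    simp only [Finset.sum_apply]
    rw [integral_finsetSum _ fun k _ => (hm k).integrable (by norm_num)]
    refine Finset.sum_congr rfl fun k _ => ?_
    exact integral_comp_eval (μ := fun _ : κ => gaussianReal 0 1) (hg k).1
  rw [hE, hv] at h
  simp only [Finset.sum_apply] at h
  have hn : 0 ≤ (∑ k, Var[g k; gaussianReal 0 1]) / c ^ 2 :=
    div_nonneg (Finset.sum_nonneg fun k _ => variance_nonneg _ _) (sq_nonneg c)
  exact ENNReal.toReal_le_of_le_ofReal hn h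

lemma gauss_odd (f : ℝ → ℝ) (hf : ∀ x, f (-x) = - f x) (hm : Measurable f) :
    ∫ t, f t ∂(gaussianReal 0 1) = 0 := by
  have h : (gaussianReal 0 1).map (fun x => -x) = gaussianReal 0 1 := by
    rw [gaussianReal_map_neg]; simp
  have h2 : ∫ t, f t ∂(gaussianReal 0 1) = ∫ t, f (-t) ∂(gaussianReal 0 1) := by
    conv_lhs => rw [← h]
    rw [integral_map (by fun_prop) hm.aestronglyMeasurable]
  simp only [hf, integral_neg] at h2
  linarith

lemma gauss_abs : ∫ t, |t| ∂(gaussianReal 0 1) = Real.sqrt (2 / Real.pi) := by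
  rw [integral_gaussianReal_eq_integral_smul (by norm_num)]
  have h1 : ∀ x : ℝ, gaussianPDFReal 0 1 x • |x| =
      (fun y : ℝ => (Real.sqrt (2 * Real.pi))⁻¹ * (y ^ (1 : ℝ) * Real.exp (-(1 / 2) * y ^ (2 : ℝ)))) |x| := by
    intro x
    simp only [gaussianPDFReal, smul_eq_mul, Real.rpow_one, Real.rpow_two, sq_abs]
    simp only [NNReal.coe_one, mul_one, sub_zero]
    rw [show -x ^ 2 / 2 = -(1 / 2) * x ^ 2 by ring]
    ring
  refine (integral_congr_ae (ae_of_all _ h1)).trans ((integral_comp_abs (f := fun y : ℝ =>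
    (Real.sqrt (2 * Real.pi))⁻¹ * (y ^ (1 : ℝ) * Real.exp (-(1 / 2) * y ^ (2 : ℝ))))).trans ?_)
  rw [integral_const_mul,
    integral_rpow_mul_exp_neg_mul_rpow (by norm_num) (by norm_num) (by norm_num)]
  norm_num
  have h2 : Real.sqrt 2 ^ 2 = 2 := Real.sq_sqrt (by norm_num)
  have := Real.sqrt_pos.2 Real.pi_pos
  have := Real.sqrt_pos.2 (show (0 : ℝ) < 2 by norm_num)
  field_simp
  linarith

lemma sign_bd (x : ℝ) : |Real.sign x| ≤ 1 := by
  rcases Real.sign_apply_eq x with h | h | h <;> rw [h] <;> norm_num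

lemma sign_meas : Measurable Real.sign := by
  unfold Real.sign
  exact Measurable.ite measurableSet_Iio measurable_const
    (Measurable.ite measurableSet_Ioi measurable_const measurable_const)

lemma abs_add_sign (x b : ℝ) : |x| + b * Real.sign x ≤ |b + x| := by
  rcases lt_trichotomy x 0 with h | h | h
  · rw [Real.sign_of_neg h, abs_of_neg h]; linarith [neg_abs_le (b + x)]
  · subst h; simp
  · rw [Real.sign_of_pos h, abs_of_pos h]; linarith [le_abs_self (b + x)]

lemma ml_id : MemLp (fun x : ℝ => x) 2 (gaussianReal 0 1) := memLp_id_gaussianReal 2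
lemma ml_abs : MemLp (fun x : ℝ => |x|) 2 (gaussianReal 0 1) := ml_id.abs
lemma ml_sign : MemLp Real.sign 2 (gaussianReal 0 1) :=
  MemLp.of_bound sign_meas.aestronglyMeasurable 1 (ae_of_all _ fun x => sign_bd x)
lemma ml_sq : MemLp (fun x : ℝ => x ^ 2) 2 (gaussianReal 0 1) := by
  have h := memLp_id_gaussianReal (μ := 0) (v := 1) 4
  have h2 := h.norm_rpow_div 2
  have e : (4 : ENNReal) / 2 = 2 := by
    rw [ENNReal.div_eq_inv_mul, show (4 : ENNReal) = 2 * 2 by norm_num, ← mul_assoc,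
      ENNReal.inv_mul_cancel (by norm_num) (by norm_num), one_mul]
  simp only [id, Real.norm_eq_abs] at h2
  simpa [e] using h2

lemma gauss_sq : ∫ t, t ^ 2 ∂(gaussianReal 0 1) = 1 := by
  have h := variance_id_gaussianReal (μ := 0) (v := 1)
  rw [variance_eq_sub (memLp_id_gaussianReal 2)] at h
  simpa using h

lemma m_lt_one : Real.sqrt (2 / Real.pi) ≤ 1 := by
  rw [Real.sqrt_le_one, div_le_one Real.pi_pos]
  linarith [Real.pi_gt_three]

lemma gauss_var0 : Var[fun _ : ℝ => (0 : ℝ); gaussianReal 0 1] = 0 := variance_zero _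

/-- selecting left coordinates -/
lemma cheb_inl (n : ℕ) {κ : Type} [Fintype κ] (g : ℝ → ℝ) (hg : MemLp g 2 (gaussianReal 0 1))
    (c : ℝ) (hc : 0 < c) :
    (gpi (Fin n ⊕ κ) 1).real {x | c ≤ |∑ i, g (x (Sum.inl i)) - n * ∫ t, g t ∂(gaussianReal 0 1)|} ≤
      n * Var[g; gaussianReal 0 1] / c ^ 2 := by
  have h := gpi_cheb (κ := Fin n ⊕ κ) (Sum.elim (fun _ => g) fun _ => fun _ => 0)
    (by rintro (i | i); exacts [hg, MemLp.zero']) c hc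
  simpa [Fintype.sum_sum_type, gauss_var0] using h

lemma cheb_inr (n : ℕ) {κ : Type} [Fintype κ] (g : ℝ → ℝ) (hg : MemLp g 2 (gaussianReal 0 1))
    (c : ℝ) (hc : 0 < c) :
    (gpi (κ ⊕ Fin n) 1).real {x | c ≤ |∑ i, g (x (Sum.inr i)) - n * ∫ t, g t ∂(gaussianReal 0 1)|} ≤
      n * Var[g; gaussianReal 0 1] / c ^ 2 := by
  have h := gpi_cheb (κ := κ ⊕ Fin n) (Sum.elim (fun _ => fun _ => 0) fun _ => g)
    (by rintro (i | i); exacts [MemLp.zero', hg]) c hc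
  simpa [Fintype.sum_sum_type, gauss_var0] using h

lemma cheb_unit {κ : Type} [Fintype κ] (c : ℝ) (hc : 0 < c) :
    (gpi (κ ⊕ Unit) 1).real {x | c ≤ |x (Sum.inr ())|} ≤
      Var[fun x : ℝ => x; gaussianReal 0 1] / c ^ 2 := by
  have h := gpi_cheb (κ := κ ⊕ Unit) (Sum.elim (fun _ => fun _ => 0) fun _ => fun x => x)
    (by rintro (i | i); exacts [MemLp.zero', ml_id]) c hc
  simpa [Fintype.sum_sum_type, gauss_var0] using h

lemma gpi_curry (n d : ℕ) :
    (gpi ((Fin n × Fin d) ⊕ Unit) 1).map (fun x i j => x (Sum.inl (i, j))) =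
      Measure.pi fun _ : Fin n => Measure.pi fun _ : Fin d => gaussianReal 0 1 := by
  have h1 := (measurePreserving_sumPiEquivProdPi (ι := Fin n × Fin d) (ι' := Unit)
    (X := fun _ => ℝ) (fun _ => gaussianReal 0 1)).map_eq
  have h2 := Measure.infinitePi_map_curry (fun (_ : Fin n) (_ : Fin d) => gaussianReal 0 1)
  simp only [Measure.infinitePi_eq_pi] at h2
  rw [← h2]
  have h3 : (Measure.pi fun _ : Fin n × Fin d => gaussianReal 0 1) =
      (gpi ((Fin n × Fin d) ⊕ Unit) 1).map (fun x p => x (Sum.inl p)) := by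
    have h4 := congrArg (fun m => m.map Prod.fst) h1
    simp only [Measure.map_fst_prod, measure_univ, one_smul] at h4
    rw [Measure.map_map measurable_fst (MeasurableEquiv.measurable _)] at h4
    exact h4.symm
  rw [h3, Measure.map_map (MeasurableEquiv.measurable _) (by fun_prop)]
  rfl



def etaB (n d : ℕ) (c c' : ℝ) : ℝ :=
  n * Var[fun x : ℝ => |x|; gaussianReal 0 1] / (n * c) ^ 2 +
  n * Var[Real.sign; gaussianReal 0 1] / (n * c) ^ 2 +
  n * Var[fun x : ℝ => x; gaussianReal 0 1] / (n * c) ^ 2 +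
  d * Var[fun x : ℝ => x ^ 2; gaussianReal 0 1] / (n * c') ^ 2 +
  Var[fun x : ℝ => x; gaussianReal 0 1] / (Real.sqrt n * c) ^ 2

lemma y_det {n d : ℕ} (hn : 0 < n) (U : Fin d → ℝ) (r β : ℝ)
    (hr0 : 0 ≤ r) (hr1 : r ≤ 1) (hb : |β| ≤ 1) (hmax : max r |β| = 1)
    (hr : ∑ j, U j ^ 2 = r ^ 2) (c c' : ℝ) (hc : 0 < c) (hc' : 0 < c')
    (g : Fin n → ℝ) (h : Fin d → ℝ)
    (h1 : |∑ i, |g i| - n * Real.sqrt (2 / Real.pi)| < n * c)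
    (h2 : |∑ i, Real.sign (g i)| < n * c) (h3 : |∑ i, g i| < n * c)
    (h4 : |∑ j, h j ^ 2 - d| < n * c') (e : ℝ) :
    n * (Real.sqrt (2 / Real.pi) - 2 * c - Real.sqrt (d / n + c')) ≤
      ∑ i, sabs e (β + r * g i) + Real.sqrt n * ∑ j, h j * U j := by
  have hn' : (0 : ℝ) < n := Nat.cast_pos.2 hn
  have hA : n * (Real.sqrt (2 / Real.pi) - 2 * c) ≤ ∑ i, |β + r * g i| := by
    rcases max_choice r |β| with hm | hm
    · have hr : r = 1 := by rw [← hm, hmax]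
      subst hr
      have : ∑ i, (|g i| + β * Real.sign (g i)) ≤ ∑ i, |β + 1 * g i| :=
        Finset.sum_le_sum fun i _ => by rw [one_mul]; exact abs_add_sign _ _
      rw [Finset.sum_add_distrib, ← Finset.mul_sum] at this
      have h5 : |β * ∑ i, Real.sign (g i)| ≤ n * c := by
        rw [abs_mul]
        calc _ ≤ 1 * (n * c) := by gcongr
          _ = _ := one_mul _
      have := (abs_lt.1 h1).1
      have := (abs_le.1 h5).1
      nlinarith
    · have hβ : |β| = 1 := by rw [← hm, hmax]
      have h5 := Finset.abs_sum_le_sum_abs (fun i => β + r * g i) univ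
      rw [Finset.sum_add_distrib, ← Finset.mul_sum] at h5
      simp only [Finset.sum_const, Finset.card_univ, Fintype.card_fin, nsmul_eq_mul] at h5
      have h6 : |(n : ℝ) * β| = n := by rw [abs_mul, hβ, mul_one, abs_of_pos hn']
      have h7 : |r * ∑ i, g i| ≤ n * c := by
        rw [abs_mul, abs_of_nonneg hr0]
        calc _ ≤ 1 * (n * c) := by gcongr
          _ = _ := one_mul _
      have h8 := abs_sub_abs_le_abs_sub ((n : ℝ) * β) (-(r * ∑ i, g i))
      rw [abs_neg, sub_neg_eq_add] at h8
      have := mul_le_mul_of_nonneg_left m_lt_one hn'.le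
      nlinarith [mul_pos hn' hc]
  have hB : -(n * Real.sqrt (d / n + c')) ≤ Real.sqrt n * ∑ j, h j * U j := by
    have cs := Finset.sum_mul_sq_le_sq_mul_sq univ h U
    have hh : ∑ j, h j ^ 2 ≤ n * (d / n + c') := by
      have := (abs_lt.1 h4).2
      rw [mul_add, mul_div_cancel₀ _ hn'.ne']; linarith
    have h5 : (∑ j, h j * U j) ^ 2 ≤ n * (d / n + c') := by
      rw [hr] at cs
      have : 0 ≤ ∑ j, h j ^ 2 := Finset.sum_nonneg fun _ _ => sq_nonneg _
      have := mul_le_of_le_one_right this (pow_le_one₀ (n := 2) hr0 hr1)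
      linarith
    have h6 := Real.abs_le_sqrt h5
    rw [Real.sqrt_mul hn'.le] at h6
    have h7 := (abs_le.1 h6).1
    have h8 := mul_le_mul_of_nonneg_left h7 (Real.sqrt_nonneg n)
    have h9 := Real.mul_self_sqrt hn'.le
    calc _ = Real.sqrt n * -(Real.sqrt n * Real.sqrt (d / n + c')) := by
            rw [mul_neg, ← mul_assoc, h9]
      _ ≤ _ := h8
  have hC : ∑ i, |β + r * g i| ≤ ∑ i, sabs e (β + r * g i) :=
    Finset.sum_le_sum fun i _ => sabs_ge _ _
  rw [mul_sub]
  linarith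

theorem fin_bound {n d : ℕ} (hn : 0 < n) {ι : Type} [Fintype ι] (U : ι → Fin d → ℝ) (r β : ι → ℝ)
    (hr0 : ∀ u, 0 ≤ r u) (hr1 : ∀ u, r u ≤ 1) (hb : ∀ u, |β u| ≤ 1)
    (hmax : ∀ u, max (r u) |β u| = 1)
    (hr : ∀ u, ∑ j, U u j ^ 2 = r u ^ 2) (c c' : ℝ) (hc : 0 < c) (hc' : 0 < c') :
    1 - etaB n d c c' ≤ (gpi ((Fin n × Fin d) ⊕ Unit) 1).real {x | ∀ u,
      n * (Real.sqrt (2 / Real.pi) - 4 * c - Real.sqrt (d / n + c')) - 1 ≤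
        ∑ i, |∑ j, x (Sum.inl (i, j)) * U u j + β u|} := by
  have hn' : (0 : ℝ) < n := Nat.cast_pos.2 hn
  have hsn : 0 < Real.sqrt n := Real.sqrt_pos.2 hn'
  set l := n * (Real.sqrt (2 / Real.pi) - 2 * c - Real.sqrt (d / n + c')) - 1 with hl
  have G := gordon_prob (n := n) U r β hr0 hr c hc l
  set P := gpi (Fin n ⊕ Fin d) 1 with hP
  set Q := gpi ((Fin n × Fin d) ⊕ Unit) 1 with hQ
  have b1 := cheb_inl n (κ := Fin d) _ ml_abs (n * c) (by positivity)
  have b2 := cheb_inl n (κ := Fin d) _ ml_sign (n * c) (by positivity)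
  have b3 := cheb_inl n (κ := Fin d) _ ml_id (n * c) (by positivity)
  have b4 := cheb_inr d (κ := Fin n) _ ml_sq (n * c') (by positivity)
  have b5 := cheb_unit (κ := Fin n × Fin d) (Real.sqrt n * c) (by positivity)
  rw [gauss_abs] at b1
  rw [gauss_odd _ (fun x => Real.sign_neg) sign_meas, mul_zero] at b2
  rw [gauss_odd (fun x => x) (fun x => rfl) measurable_id, mul_zero] at b3
  rw [gauss_sq, mul_one] at b4
  simp only [sub_zero] at b2 b3
  set A1 := {x : Fin n ⊕ Fin d → ℝ | n * c ≤ |∑ i, |x (Sum.inl i)| - n * Real.sqrt (2 / Real.pi)|}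
  set A2 := {x : Fin n ⊕ Fin d → ℝ | n * c ≤ |∑ i, Real.sign (x (Sum.inl i))|}
  set A3 := {x : Fin n ⊕ Fin d → ℝ | n * c ≤ |∑ i, x (Sum.inl i)|}
  set A4 := {x : Fin n ⊕ Fin d → ℝ | n * c' ≤ |∑ j, x (Sum.inr j) ^ 2 - d|}
  set A5 := {x : (Fin n × Fin d) ⊕ Unit → ℝ | Real.sqrt n * c ≤ |x (Sum.inr ())|}
  set EY := {y : Fin n ⊕ Fin d → ℝ | ∀ u, l + 1 ≤ ∑ i, sabs c (β u + r u * y (Sum.inl i)) +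
      Real.sqrt n * ∑ j, y (Sum.inr j) * U u j}
  set EX := {x : (Fin n × Fin d) ⊕ Unit → ℝ | ∀ u, l < ∑ i, sabs c (β u +
      ∑ j, x (Sum.inl (i, j)) * U u j) + Real.sqrt n * r u * x (Sum.inr ())}
  set T := {x : (Fin n × Fin d) ⊕ Unit → ℝ | ∀ u,
      n * (Real.sqrt (2 / Real.pi) - 4 * c - Real.sqrt (d / n + c')) - 1 ≤
        ∑ i, |∑ j, x (Sum.inl (i, j)) * U u j + β u|}
  have sY : (Set.univ : Set (Fin n ⊕ Fin d → ℝ)) ⊆ EY ∪ (A1 ∪ (A2 ∪ (A3 ∪ A4))) := by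
    intro y _
    by_contra hy
    simp only [Set.mem_union, not_or] at hy
    obtain ⟨hE, q1, q2, q3, q4⟩ := hy
    refine hE fun u => ?_
    have := y_det hn (U u) (r u) (β u) (hr0 u) (hr1 u) (hb u) (hmax u) (hr u) c c' hc hc'
      (fun i => y (Sum.inl i)) (fun j => y (Sum.inr j)) (not_le.1 q1) (not_le.1 q2) (not_le.1 q3)
      (not_le.1 q4) c
    rw [hl]; linarith
  have sX : EX ⊆ T ∪ A5 := by
    intro x hx
    by_contra hxx
    rw [Set.mem_union, not_or] at hxx
    obtain ⟨hT, q5⟩ := hxx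
    refine hT fun u => ?_
    have q5 : |x (Sum.inr ())| < Real.sqrt n * c := not_le.1 q5
    have h1 := hx u
    have h2 : ∑ i, sabs c (β u + ∑ j, x (Sum.inl (i, j)) * U u j) ≤
        ∑ i, |∑ j, x (Sum.inl (i, j)) * U u j + β u| + n * c := by
      have : ∑ i, sabs c (β u + ∑ j, x (Sum.inl (i, j)) * U u j) ≤
        ∑ i : Fin n, (|∑ j, x (Sum.inl (i, j)) * U u j + β u| + c) :=
        Finset.sum_le_sum fun i _ => by rw [add_comm (β u)]; exact sabs_le _ _ hc
      rw [Finset.sum_add_distrib] at this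
      simpa using this
    have h3 : Real.sqrt n * r u * x (Sum.inr ()) ≤ n * c := by
      calc _ ≤ |Real.sqrt n * r u * x (Sum.inr ())| := le_abs_self _
        _ = Real.sqrt n * (r u * |x (Sum.inr ())|) := by
          rw [abs_mul, abs_mul, abs_of_pos hsn, abs_of_nonneg (hr0 u), mul_assoc]
        _ ≤ Real.sqrt n * (1 * (Real.sqrt n * c)) := by gcongr; exact hr1 u
        _ = n * c := by rw [one_mul, ← mul_assoc, Real.mul_self_sqrt hn'.le]
    rw [hl] at h1
    linarith
  have kY : 1 ≤ P.real EY + (P.real A1 + (P.real A2 + (P.real A3 + P.real A4))) := by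
    have h0 : P.real Set.univ = 1 := by simp
    rw [← h0]
    refine (measureReal_mono sY).trans ((measureReal_union_le _ _).trans ?_)
    gcongr
    refine (measureReal_union_le _ _).trans ?_
    gcongr
    refine (measureReal_union_le _ _).trans ?_
    gcongr
    exact measureReal_union_le _ _
  have kX : Q.real EX ≤ Q.real T + Q.real A5 :=
    (measureReal_mono sX).trans (measureReal_union_le _ _)
  unfold etaB
  linarith

theorem all_bound {n d : ℕ} (hn : 0 < n) (c c' : ℝ) (hc : 0 < c) (hc' : 0 < c') (t : ℝ)
    (ht : t ≤ n * (Real.sqrt (2 / Real.pi) - 4 * c - Real.sqrt (d / n + c')) - 1)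
    (T : Set (Fin n → Fin d → ℝ))
    (hT : T = {x | ∀ (u : Fin d → ℝ) (β₀ : ℝ), Real.sqrt (∑ j, u j ^ 2) ≤ 1 → |β₀| ≤ 1 →
      max (Real.sqrt (∑ j, u j ^ 2)) |β₀| = 1 → t ≤ ∑ i, |(∑ j, x i j * u j) + β₀|}) :
    MeasurableSet T ∧ ENNReal.ofReal (1 - etaB n d c c') ≤
      (Measure.pi fun _ : Fin n => Measure.pi fun _ : Fin d => gaussianReal 0 1) T := by
  let K : Set ((Fin d → ℝ) × ℝ) := {p | Real.sqrt (∑ j, p.1 j ^ 2) ≤ 1 ∧ |p.2| ≤ 1 ∧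
    max (Real.sqrt (∑ j, p.1 j ^ 2)) |p.2| = 1}
  haveI : Nonempty K := ⟨⟨(0, 1), by simp [K]⟩⟩
  let D : ℕ → K := TopologicalSpace.denseSeq K
  let S : ℕ → Set (Fin n → Fin d → ℝ) := fun N =>
    {x | ∀ m : Fin N, t ≤ ∑ i, |(∑ j, x i j * (D m).1.1 j) + (D m).1.2|}
  have hTS : T = ⋂ N, S N := by
    rw [hT]
    ext x
    rw [Set.mem_iInter]
    constructor
    · intro h N m
      exact h _ _ (D m).2.1 (D m).2.2.1 (D m).2.2.2
    · intro h u β h1 h2 h3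
      have hcl : IsClosed {p : K | t ≤ ∑ i, |(∑ j, x i j * p.1.1 j) + p.1.2|} :=
        isClosed_le continuous_const (by fun_prop)
      have hsub : Set.range D ⊆ {p : K | t ≤ ∑ i, |(∑ j, x i j * p.1.1 j) + p.1.2|} := by
        rintro _ ⟨m, rfl⟩
        exact h (m + 1) ⟨m, Nat.lt_succ_self m⟩
      have hd : Dense (Set.range D) := TopologicalSpace.denseRange_denseSeq K
      have := (hcl.closure_subset_iff.2 hsub) (hd ⟨(u, β), h1, h2, h3⟩)
      exact this
  have mS : ∀ N, MeasurableSet (S N) := fun N => by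
    simp only [S]
    rw [Set.ofPred_forall]
    exact MeasurableSet.iInter fun u => measurableSet_le measurable_const
      (Continuous.measurable (by fun_prop))
  have anti : Antitone S := fun N M hNM x hx m => hx ⟨m, m.2.trans_le hNM⟩
  refine ⟨hTS ▸ MeasurableSet.iInter mS, ?_⟩
  have lim := tendsto_measure_iInter_atTop
    (μ := Measure.pi fun _ : Fin n => Measure.pi fun _ : Fin d => gaussianReal 0 1)
    (fun N => (mS N).nullMeasurableSet) anti ⟨0, measure_ne_top _ _⟩
  rw [← hTS] at lim
  refine ge_of_tendsto' lim fun N => ?_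
  rw [Function.comp_apply, ← gpi_curry, Measure.map_apply (by fun_prop) (mS N)]
  rw [ENNReal.ofReal_le_iff_le_toReal (measure_ne_top _ _)]
  refine (fin_bound hn (ι := Fin N) (fun m => (D m).1.1)
    (fun m => Real.sqrt (∑ j, (D m).1.1 j ^ 2)) (fun m => (D m).1.2)
    (fun m => Real.sqrt_nonneg _) (fun m => (D m).2.1) (fun m => (D m).2.2.1)
    (fun m => (D m).2.2.2)
    (fun m => (Real.sq_sqrt (Finset.sum_nonneg fun j _ => sq_nonneg _)).symm) c c' hc hc').trans ?_
  refine measureReal_mono fun x hx m => ?_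
  exact ht.trans (hx m)

lemma eta_lim (γ : ℝ) (d n : ℕ → ℕ) (hn : Tendsto n atTop atTop)
    (hratio : Tendsto (fun k => (d k : ℝ) / (n k)) atTop (nhds γ)) (c c' : ℝ) (hc : 0 < c)
    (hc' : 0 < c') : Tendsto (fun k => etaB (n k) (d k) c c') atTop (nhds 0) := by
  have hi : Tendsto (fun k => ((n k : ℝ))⁻¹) atTop (nhds 0) :=
    tendsto_inv_atTop_zero.comp (tendsto_natCast_atTop_atTop.comp hn)
  have h1 := (hi.mul_const ((Var[fun x : ℝ => |x|; gaussianReal 0 1] +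
    Var[Real.sign; gaussianReal 0 1] + Var[fun x : ℝ => x; gaussianReal 0 1] +
    Var[fun x : ℝ => x; gaussianReal 0 1]) / c ^ 2)).add
    ((hratio.mul hi).mul_const (Var[fun x : ℝ => x ^ 2; gaussianReal 0 1] / c' ^ 2))
  simp only [mul_zero, zero_mul, add_zero] at h1
  refine h1.congr' ?_
  filter_upwards [hn.eventually_gt_atTop 0] with k hk
  have hk' : (0 : ℝ) < n k := Nat.cast_pos.2 hk
  unfold etaB
  generalize Var[fun x : ℝ => |x|; gaussianReal 0 1] = V1
  generalize Var[Real.sign; gaussianReal 0 1] = V2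
  generalize Var[fun x : ℝ => x; gaussianReal 0 1] = V3
  generalize Var[fun x : ℝ => x ^ 2; gaussianReal 0 1] = V4
  rw [mul_pow (Real.sqrt _), Real.sq_sqrt hk'.le]
  field_simp
  ring

/-- Lemma 18 of the paper.  Let `{X_i}_{i=1}^n` be i.i.d. `N(0, I_d)` vectors.
As `d, n → ∞` with `d/n → γ ∈ [0, ∞)`, for every `δ > 0` the probability that
`(1/n) ∑_i |X_iᵀu + β₀| ≥ √(2/π) − √γ − δ` simultaneously for all `(u, β₀)` with `‖u‖₂ ≤ 1`,
`|β₀| ≤ 1` and `max{‖u‖₂, |β₀|} = 1` converges to one; i.e. the liminf of the constrained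
infimum is at least `√(2/π) − √γ` in probability. -/
theorem gaussian_abs_lower_bound
    {Ω : Type*} [MeasurableSpace Ω] (μ : Measure Ω) [IsProbabilityMeasure μ]
    (γ : ℝ) (hγ : 0 ≤ γ)
    (d n : ℕ → ℕ) (hd : Tendsto d atTop atTop) (hn : Tendsto n atTop atTop)
    (hratio : Tendsto (fun k => (d k : ℝ) / (n k)) atTop (nhds γ))
    (X : ∀ k, Ω → Fin (n k) → Fin (d k) → ℝ)
    (hXmeas : ∀ k, Measurable (X k))
    -- the rows X_1, …, X_n are i.i.d. N(0, I_d)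
    (hXlaw : ∀ k, μ.map (X k) = Measure.pi fun _ : Fin (n k) => stdGaussian (d k)) :
    ∀ δ > (0 : ℝ),
      Tendsto (fun k =>
          μ {ω | ∀ (u : Fin (d k) → ℝ) (β₀ : ℝ),
            Real.sqrt (∑ j, u j ^ 2) ≤ 1 → |β₀| ≤ 1 →
            max (Real.sqrt (∑ j, u j ^ 2)) |β₀| = 1 →
            Real.sqrt (2 / Real.pi) - Real.sqrt γ - δ ≤
              (1 / (n k) : ℝ) * ∑ i, |(∑ j, X k ω i j * u j) + β₀|})
        atTop (nhds 1) := by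
  intro δ hδ
  have hc : 0 < δ / 16 := by positivity
  have hc' : 0 < (δ / 4) ^ 2 / 2 := by positivity
  have hη := eta_lim γ d n hn hratio (δ / 16) ((δ / 4) ^ 2 / 2) hc hc'
  have hlow : Tendsto (fun k => ENNReal.ofReal (1 - etaB (n k) (d k) (δ / 16) ((δ / 4) ^ 2 / 2)))
      atTop (nhds 1) := by
    have h := ENNReal.tendsto_ofReal (hη.const_sub 1)
    simpa using h
  refine tendsto_of_tendsto_of_tendsto_of_le_of_le' hlow tendsto_const_nhds ?_
    (Eventually.of_forall fun k => prob_le_one)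
  have hi : Tendsto (fun k => ((n k : ℝ))⁻¹) atTop (nhds 0) :=
    tendsto_inv_atTop_zero.comp (tendsto_natCast_atTop_atTop.comp hn)
  filter_upwards [hn.eventually_gt_atTop 0, hi.eventually_lt_const (show 0 < δ / 4 by positivity),
    hratio.eventually_lt_const (show γ < γ + (δ / 4) ^ 2 / 2 by linarith)] with k hk hk2 hk3
  have hk' : (0 : ℝ) < n k := Nat.cast_pos.2 hk
  have hs : Real.sqrt ((d k : ℝ) / (n k) + (δ / 4) ^ 2 / 2) ≤ Real.sqrt γ + δ / 4 := by
    refine Real.sqrt_le_iff.2 ⟨by positivity, ?_⟩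
    have := Real.sq_sqrt hγ
    nlinarith [Real.sqrt_nonneg γ]
  have hinv : (n k : ℝ) * (n k : ℝ)⁻¹ = 1 := mul_inv_cancel₀ hk'.ne'
  have ht : (n k : ℝ) * (Real.sqrt (2 / Real.pi) - Real.sqrt γ - δ) ≤
      n k * (Real.sqrt (2 / Real.pi) - 4 * (δ / 16) -
        Real.sqrt ((d k : ℝ) / (n k) + (δ / 4) ^ 2 / 2)) - 1 := by
    nlinarith
  obtain ⟨mT, hT⟩ := all_bound hk (δ / 16) ((δ / 4) ^ 2 / 2) hc hc' _ ht _ rfl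
  have hl := hXlaw k
  unfold _root_.stdGaussian at hl
  rw [← hl, Measure.map_apply (hXmeas k) mT] at hT
  refine hT.trans (measure_mono fun ω hω u β h1 h2 h3 => ?_)
  have := hω u β h1 h2 h3
  rw [one_div, inv_mul_eq_div, le_div_iff₀ hk', mul_comm]
  exact this



end
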